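/- arXiv:2405.00778 — 2 statements merged into one kernel-verified Lean document; each statement's English description precedes it below -/
import Mathlib

section
/- Let F be a field and let m, n, r be integers with 3 ≤ m and 0 ≤ r ≤ n. Let A_1, …, A_m ⊆ [n] be sets of size at most r, set E = ∪_{i∈[m]} {i}×A_i ⊆ [m]×[n], and for k ∈ {1,2,3} let S_k = {j ∈ [n] : j belongs to exactly k of the sets A_1,…,A_m}. Then E is independent in the tensor matroid T_{m,n}(3,r,F) if and only if the following five conditions hold: (1) |A_i ∩ A_j ∩ A_k ∩ A_ℓ| = 0 for all distinct i, j, k, ℓ ∈ [m]; (2) |A_i ∖ S_3| + |S_3| ≤ r for all i ∈ [m]; (3) |(A_i ∩ A_j) ∖ S_3| + |(A_k ∩ A_ℓ) ∖ S_3| + |S_3| ≤ r for all distinct i, j, k, ℓ ∈ [m]; (4) |A_i ∖ S_3| + |A_j ∖ S_3| + |S_2 ∖ (S_3 ∪ A_i ∪ A_j)| + 2|S_3| ≤ 2r for all distinct i, j ∈ [m]; (5) |S_1| + 2|S_2| + 3|S_3| ≤ 3r. -/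
open scoped Classical

noncomputable section

/-- The field of fractions of the polynomial ring over `F` in variables
`X i k` (`i ∈ [m]`, `k ∈ [s]`) and `Y j l` (`j ∈ [n]`, `l ∈ [r]`). -/
abbrev TField (F : Type*) [Field F] (m n s r : ℕ) :=
  FractionRing (MvPolynomial ((Fin m × Fin s) ⊕ (Fin n × Fin r)) F)

/-- The vector `u_i ⊗ v_j ∈ K_F^{[s]×[r]}` with `(k,l)`-entry `X_{ik} · Y_{jl}`. -/
noncomputable def tvec (F : Type*) [Field F] (m n s r : ℕ) (e : Fin m × Fin n) :
    Fin s × Fin r → TField F m n s r := fun kl =>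
  algebraMap (MvPolynomial ((Fin m × Fin s) ⊕ (Fin n × Fin r)) F) (TField F m n s r)
      (MvPolynomial.X (Sum.inl (e.1, kl.1))) *
  algebraMap (MvPolynomial ((Fin m × Fin s) ⊕ (Fin n × Fin r)) F) (TField F m n s r)
      (MvPolynomial.X (Sum.inr (e.2, kl.2)))

/-- `E` is independent in the tensor matroid `T_{m,n}(s,r,F)`: the family
`{u_i ⊗ v_j : (i,j) ∈ E}` is linearly independent over `K_F`. -/
def TensorIndep (F : Type*) [Field F] (m n s r : ℕ) (E : Set (Fin m × Fin n)) : Prop :=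
  LinearIndependent (TField F m n s r) (fun e : E => tvec F m n s r e)

/-- `E` is spanning in the tensor matroid `T_{m,n}(s,r,F)`: the family
`{u_i ⊗ v_j : (i,j) ∈ E}` spans `K_F^{[s]×[r]}`. -/
def TensorSpanning (F : Type*) [Field F] (m n s r : ℕ) (E : Set (Fin m × Fin n)) : Prop :=
  Submodule.span (TField F m n s r) (tvec F m n s r '' E) = ⊤

/-- `Smult A k` is the set of `j ∈ [n]` which appear in exactly `k` of the sets `A i`. -/
def Smult {m n : ℕ} (A : Fin m → Finset (Fin n)) (k : ℕ) : Finset (Fin n) :=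
  Finset.univ.filter (fun j => (Finset.univ.filter (fun i => j ∈ A i)).card = k)

/-!
Write `N j` for the set of rows `i` with `j ∈ A i` and `W j` for the span of the `u i` with
`i ∈ N j`. The set `E` is independent exactly when each family `(u i)`, `i ∈ N j`, is independent,
which is condition (1), and the subspaces `W j ⊗ K (v j)` are independent. As the `v j` are generic,
the latter holds as soon as some choice of vectors `v j` in `K ^ r` makes these subspaces
independent. Contracting with a subspace `U` shows that such a choice requires
`∑ j, dim (W j ⊓ U) ≤ r * dim U` for all `U`, and conversely this Hall-type condition suffices when
every `W j` is `⊥`, a line, a hyperplane or `⊤`: Rado's theorem distributes the lines over the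
`r` coordinates, and vectors on a moment curve take care of the hyperplanes.

In dimension 3 every `W j` is of this kind, and the points `u i` are in general position: no three
are collinear, and the lines spanned by three disjoint pairs are not concurrent. Hence the binding
subspaces `U` are the points `u i`, the intersections of two lines spanned by disjoint pairs, the
lines spanned by two points, and the whole space, which yield conditions (2), (3), (4) and (5).
-/

section Transversals

open Module Submodule

variable {K V J : Type*} [Field K] [AddCommGroup V] [Module K V]

/-- Rado's condition for the family of finite sets `S j` of vectors: any set `X` of indices has
a union of rank at least `|X|`. -/
def RadoCondition (K : Type*) {V J : Type*} [Field K] [AddCommGroup V] [Module K V]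
    (S : J → Finset V) : Prop :=
  ∀ X : Finset J, X.card ≤ finrank K (span K (⋃ j ∈ X, (S j : Set V)))

theorem RadoCondition.linearIndependent [Finite J] {y : J → V}
    (hy : RadoCondition K fun j => {y j}) : LinearIndependent K y := by
  have := Fintype.ofFinite J
  rw [linearIndependent_iff_card_le_finrank_span]
  have hrange : ⋃ j ∈ Finset.univ, (({y j} : Finset V) : Set V) = Set.range y := by
    ext; simp [eq_comm]
  exact hrange ▸ hy Finset.univ

theorem RadoCondition.nonempty {S : J → Finset V} (hS : RadoCondition K S) (j : J) :
    (S j).Nonempty := by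
  by_contra h
  have hempty : ⋃ i ∈ ({j} : Finset J), (S i : Set V) = ∅ := by
    simp [Finset.not_nonempty_iff_eq_empty.1 h]
  have hj := hS {j}
  rw [hempty, span_empty, finrank_bot] at hj
  simp at hj

variable [FiniteDimensional K V]

theorem RadoCondition.erase_or_erase {S : J → Finset V} (hS : RadoCondition K S) {j₀ : J}
    {a b : V} (hab : a ≠ b) :
    RadoCondition K (Function.update S j₀ ((S j₀).erase a)) ∨
      RadoCondition K (Function.update S j₀ ((S j₀).erase b)) := by
  by_contra! hcon
  simp only [RadoCondition, not_forall, not_le] at hcon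
  obtain ⟨⟨X, hX⟩, Y, hY⟩ := hcon
  set Sa := Function.update S j₀ ((S j₀).erase a) with hSa
  set Sb := Function.update S j₀ ((S j₀).erase b) with hSb
  have eq_of_ne : ∀ {j}, j ≠ j₀ → Sa j = S j ∧ Sb j = S j := fun h => by simp [hSa, hSb, h]
  have mem_of_violated : ∀ {Z : Finset J} {T : J → Finset V}, (∀ j ≠ j₀, T j = S j) →
      finrank K (span K (⋃ j ∈ Z, (T j : Set V))) < Z.card → j₀ ∈ Z := by
    intro Z T hT hZ
    by_contra hj₀
    have hST : ⋃ j ∈ Z, (S j : Set V) = ⋃ j ∈ Z, (T j : Set V) :=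
      Set.iUnion₂_congr fun j hj => by rw [hT j (ne_of_mem_of_not_mem hj hj₀)]
    refine (hS Z).not_gt ?_
    rwa [hST]
  have hjX : j₀ ∈ X := mem_of_violated (fun j h => (eq_of_ne h).1) hX
  have hjY : j₀ ∈ Y := mem_of_violated (fun j h => (eq_of_ne h).2) hY
  set P := span K (⋃ j ∈ X, (Sa j : Set V))
  set Q := span K (⋃ j ∈ Y, (Sb j : Set V))
  have hsup : (X ∪ Y).card ≤ finrank K ↥(P ⊔ Q) := by
    refine (hS _).trans (finrank_mono ?_)
    rw [← span_union]
    refine span_mono (Set.iUnion₂_subset fun j hj v hv => ?_)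
    simp only [Set.mem_union, Set.mem_iUnion, Finset.mem_coe]
    grind
  have hinf : ((X ∩ Y).erase j₀).card ≤ finrank K ↥(P ⊓ Q) := by
    refine (hS _).trans (finrank_mono (le_inf ?_ ?_)) <;>
    · refine span_mono (Set.iUnion₂_subset fun j hj v hv => ?_)
      simp only [Set.mem_iUnion, Finset.mem_coe]
      grind
  have := Submodule.finrank_sup_add_finrank_inf_eq P Q
  have := Finset.card_union_add_card_inter X Y
  have := Finset.card_erase_add_one (Finset.mem_inter.2 ⟨hjX, hjY⟩)
  omega

theorem RadoCondition.exists_linearIndependent_transversal [Finite J] {S : J → Finset V}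
    (hS : RadoCondition K S) : ∃ y : J → V, (∀ j, y j ∈ S j) ∧ LinearIndependent K y := by
  have := Fintype.ofFinite J
  induction hN : ∑ j, (S j).card using Nat.strong_induction_on generalizing S with
  | _ N ih =>
  by_cases hle : ∀ j, (S j).card ≤ 1
  · choose y hy using fun j => Finset.card_eq_one.1 ((hle j).antisymm (hS.nonempty j).card_pos)
    obtain rfl : S = fun j => {y j} := funext hy
    exact ⟨y, fun j => Finset.mem_singleton_self _, hS.linearIndependent⟩
  · push Not at hle
    obtain ⟨j₀, hj₀⟩ := hle
    obtain ⟨a, ha, b, hb, hab⟩ := Finset.one_lt_card.1 hj₀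
    have descend : ∀ c ∈ S j₀, RadoCondition K (Function.update S j₀ ((S j₀).erase c)) →
        ∃ y : J → V, (∀ j, y j ∈ S j) ∧ LinearIndependent K y := by
      intro c hc hSc
      have hsub : ∀ j, Function.update S j₀ ((S j₀).erase c) j ⊆ S j := fun j => by
        rcases eq_or_ne j j₀ with rfl | hj
        · simpa using Finset.erase_subset c (S j)
        · simp [hj]
      have hlt : ∑ j, (Function.update S j₀ ((S j₀).erase c) j).card < N :=
        hN ▸ Finset.sum_lt_sum (fun j _ => Finset.card_le_card (hsub j))
          ⟨j₀, Finset.mem_univ _, by simpa using Finset.card_erase_lt_of_mem hc⟩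
      obtain ⟨y, hy, hli⟩ := ih _ hlt hSc rfl
      exact ⟨y, fun j => hsub j (hy j), hli⟩
    exact (hS.erase_or_erase hab).elim (descend a ha) (descend b hb)

end Transversals

section MatchingAndColouring

open Module Submodule

variable {K V J D : Type*} [Field K] [AddCommGroup V] [Module K V]

/-- The vectors of `(D → K) × (Fin k → V)` that offer `j` either a slot `d` with `p d j` or one
of `k` colours. A linearly independent transversal uses each slot at most once and gives each
colour to a set on which `f` is linearly independent. -/
def slotsAndColours (K : Type*) {V J D : Type*} [Field K] [AddCommGroup V] [Module K V]
    [Fintype D] (p : D → J → Prop) (f : J → V) (k : ℕ) (j : J) :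
    Finset ((D → K) × (Fin k → V)) :=
  (Finset.univ.filter fun d => p d j).image (fun d => (Pi.single d 1, 0)) ∪
    Finset.univ.image fun c => (0, Pi.single c (f j))

theorem card_add_mul_finrank_le_finrank [Finite D] [FiniteDimensional K V] {k : ℕ}
    {N : Finset D} {U : Submodule K V} {R : Submodule K ((D → K) × (Fin k → V))}
    (hN : ∀ d ∈ N, (Pi.single d 1, 0) ∈ R) (hU : ∀ c, ∀ w ∈ U, (0, Pi.single c w) ∈ R) :
    N.card + k * finrank K U ≤ finrank K R := by
  let single : N → D → K := fun d => Pi.single d 1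
  have hsingle : LinearIndependent K single :=
    (Pi.linearIndependent_single_one D K).comp _ Subtype.val_injective
  let L : ((N → K) × (Fin k → U)) →ₗ[K] (D → K) × (Fin k → V) :=
    (Fintype.linearCombination K single).prodMap (U.subtype.compLeft (Fin k))
  have hL : Function.Injective L := hsingle.fintypeLinearCombination_injective.prodMap
    fun _ _ h => funext fun c => Subtype.ext (congrFun h c)
  have hLR : LinearMap.range L ≤ R := by
    rintro _ ⟨⟨a, w⟩, rfl⟩
    have hsum : L (a, w) = ∑ d, a d • (single d, (0 : Fin k → V)) +
        ∑ c, ((0 : D → K), (Pi.single c (w c : V) : Fin k → V)) := by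
      refine Prod.ext ?_ ?_
      · simp [L, Prod.fst_sum, Fintype.linearCombination_apply]
      · simp only [L, LinearMap.prodMap_apply, Prod.snd_add, Prod.snd_sum, Prod.smul_snd,
          smul_zero, Finset.sum_const_zero, zero_add, Finset.univ_sum_single]
        rfl
    rw [hsum]
    exact add_mem (sum_mem fun d _ => R.smul_mem _ (hN d d.2)) (sum_mem fun c _ => hU c _ (w c).2)
  calc N.card + k * finrank K U = finrank K ((N → K) × (Fin k → U)) := by
        simp [finrank_pi_fintype]
    _ = finrank K (LinearMap.range L) := (LinearMap.finrank_range_of_inj hL).symm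
    _ ≤ finrank K R := finrank_mono hLR

theorem card_add_mul_finrank_le_finrank_span_slotsAndColours [Fintype D] [FiniteDimensional K V]
    (p : D → J → Prop) (f : J → V) (k : ℕ) (X : Finset J) :
    {d | ∃ j ∈ X, p d j}.ncard + k * finrank K (span K (f '' X)) ≤
      finrank K (span K (⋃ j ∈ X, (slotsAndColours K p f k j : Set ((D → K) × (Fin k → V))))) := by
  have hncard : {d | ∃ j ∈ X, p d j}.ncard = (Finset.univ.filter fun d => ∃ j ∈ X, p d j).card := by
    simp [← Set.ncard_coe_finset]
  set R := span K (⋃ j ∈ X, (slotsAndColours K p f k j : Set ((D → K) × (Fin k → V))))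
  rw [hncard]
  refine card_add_mul_finrank_le_finrank (fun d hd => ?_) fun c => ?_
  · obtain ⟨j, hj, hd⟩ := (Finset.mem_filter.1 hd).2
    refine subset_span (Set.mem_biUnion hj ?_)
    simp only [slotsAndColours, Finset.coe_union, Finset.coe_image]
    exact Or.inl ⟨d, by simpa using hd, rfl⟩
  · change span K (f '' X) ≤
      R.comap (LinearMap.inr K (D → K) (Fin k → V) ∘ₗ LinearMap.single K (fun _ => V) c)
    refine span_le.2 ?_
    rintro _ ⟨j, hj, rfl⟩
    refine subset_span (Set.mem_biUnion hj ?_)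
    simp [slotsAndColours]

theorem linearIndepOn_of_forall_exists_eq {V' : Type*} [AddCommGroup V'] [Module K V']
    {S Q : Finset J} {y : S → V'} (hy : LinearIndependent K y) (g : V →ₗ[K] V') {f : J → V}
    (hQ : ∀ j ∈ Q, ∃ h : j ∈ S, y ⟨j, h⟩ = g (f j)) : LinearIndepOn K f (Q : Set J) := by
  let incl : Q → S := fun j => ⟨j, (hQ j j.2).1⟩
  have hincl : Function.Injective incl := fun _ _ h =>
    Subtype.ext (congrArg (fun j : S => (j : J)) h)
  have hg : ⇑g ∘ (fun j : Q => f j) = y ∘ incl := funext fun j => (hQ j j.2).2.symm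
  exact LinearIndependent.of_comp g (hg ▸ hy.comp incl hincl)

theorem exists_matching_and_colouring [Finite D] [FiniteDimensional K V] (p : D → J → Prop)
    (f : J → V) (k : ℕ) {S : Finset J}
    (hS : ∀ X ⊆ S, X.card ≤ {d | ∃ j ∈ X, p d j}.ncard + k * finrank K (span K (f '' X))) :
    ∃ (P : D → Finset J) (Q : Fin k → Finset J),
      (∀ j ∈ S, (∃ d, j ∈ P d) ∨ ∃ c, j ∈ Q c) ∧
      (∀ d, (P d).card ≤ 1 ∧ ∀ j ∈ P d, j ∈ S ∧ p d j) ∧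
      ∀ c, Q c ⊆ S ∧ LinearIndepOn K f (Q c : Set J) := by
  have := Fintype.ofFinite D
  have hRado : RadoCondition K fun j : S => slotsAndColours K p f k j := fun X => by
    have := (hS (X.map (Function.Embedding.subtype _)) (Finset.map_subtype_subset X)).trans
      (card_add_mul_finrank_le_finrank_span_slotsAndColours p f k _)
    rw [Finset.card_map] at this
    have hunion : ⋃ j ∈ X.map (Function.Embedding.subtype (· ∈ S)),
        (slotsAndColours K p f k j : Set ((D → K) × (Fin k → V))) =
          ⋃ j ∈ X, (slotsAndColours K p f k (j : J) : Set ((D → K) × (Fin k → V))) := by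
      ext; simp
    exact hunion ▸ this
  obtain ⟨y, hyS, hy⟩ := hRado.exists_linearIndependent_transversal
  refine ⟨fun d => S.filter fun j => p d j ∧ ∃ h : j ∈ S, y ⟨j, h⟩ = (Pi.single d 1, 0),
    fun c => S.filter fun j => ∃ h : j ∈ S, y ⟨j, h⟩ = (0, Pi.single c (f j)), ?_, ?_, ?_⟩
  · intro j hj
    have := hyS ⟨j, hj⟩
    simp only [slotsAndColours, Finset.mem_union, Finset.mem_image, Finset.mem_filter] at this
    rcases this with ⟨d, hd, h⟩ | ⟨c, -, h⟩
    · exact Or.inl ⟨d, by simp [hj, hd.2, h]⟩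
    · exact Or.inr ⟨c, by simp [hj, h]⟩
  · refine fun d => ⟨Finset.card_le_one.2 fun i hi j hj => ?_, fun j hj => ?_⟩
    · obtain ⟨-, -, hi', hi⟩ := Finset.mem_filter.1 hi
      obtain ⟨-, -, hj', hj⟩ := Finset.mem_filter.1 hj
      exact congrArg Subtype.val (hy.injective (hi.trans hj.symm))
    · exact ⟨(Finset.mem_filter.1 hj).1, (Finset.mem_filter.1 hj).2.1⟩
  · exact fun c => ⟨Finset.filter_subset _ _, linearIndepOn_of_forall_exists_eq hy
      (LinearMap.inr K (D → K) (Fin k → V) ∘ₗ LinearMap.single K (fun _ => V) c)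
      fun j hj => (Finset.mem_filter.1 hj).2⟩

end MatchingAndColouring

section IndepTensors

open Module Submodule

variable {K V J : Type*} [Field K] [AddCommGroup V] [Module K V] [Fintype J]

/-- The subspaces `W j ⊗ K (v j)` of `V ⊗ (ρ → K)` are independent: a sum `∑ j, x j ⊗ v j` with
`x j ∈ W j` vanishes only if every `x j` does. The `l`-th coordinate of this sum is
`∑ j, v j l • x j`, which assumes that no `v j` with `W j ≠ ⊥` is zero. -/
def IndepTensors {ρ : Type*} (v : J → ρ → K) (W : J → Submodule K V) : Prop :=
  ∀ x : J → V, (∀ j, x j ∈ W j) → (∀ l, ∑ j, v j l • x j = 0) → ∀ j, x j = 0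

/-- Some choice of vectors `v j ∈ K ^ r` makes the subspaces `W j ⊗ K (v j)` independent. -/
def HasIndepTensors (r : ℕ) (W : J → Submodule K V) : Prop :=
  ∃ v : J → Fin r → K, IndepTensors v W

theorem IndepTensors.hasIndepTensors {ρ : Type*} [Fintype ρ] {v : J → ρ → K}
    {W : J → Submodule K V} (hv : IndepTensors v W) {r : ℕ} (hr : Fintype.card ρ ≤ r) :
    HasIndepTensors r W := by
  obtain ⟨φ⟩ := Function.Embedding.nonempty_of_card_le (hr.trans_eq (Fintype.card_fin r).symm)
  refine ⟨fun j => Function.extend φ (v j) 0, fun x hxW hx => hv x hxW fun l => ?_⟩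
  simpa only [φ.injective.extend_apply] using hx (φ l)

theorem hasIndepTensors_of_forall_eq_bot {W : J → Submodule K V} (hW : ∀ j, W j = ⊥) (r : ℕ) :
    HasIndepTensors r W :=
  ⟨0, fun _ hx _ j => (mem_bot K).1 (hW j ▸ hx j)⟩

theorem hasIndepTensors_of_cover {W : J → Submodule K V} {r : ℕ} {C : Type*} [Fintype C]
    {T : C → Finset J} {d : C → ℕ} (hT : ∀ c, HasIndepTensors (d c) fun j : T c => W j)
    (hcover : ∀ j, W j ≠ ⊥ → ∃ c, j ∈ T c) (hd : ∑ c, d c ≤ r) : HasIndepTensors r W := by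
  rcases isEmpty_or_nonempty C with hC | hC
  · exact hasIndepTensors_of_forall_eq_bot
      (fun j => by_contra fun h => hC.elim (hcover j h).choose) r
  choose! owner howner using hcover
  choose v hv using hT
  let w : J → (Σ c, Fin (d c)) → K := fun j s =>
    if h : j ∈ T s.1 ∧ owner j = s.1 then v s.1 ⟨j, h.1⟩ s.2 else 0
  suffices hw : IndepTensors w W from hw.hasIndepTensors (by simpa using hd)
  intro x hxW hx j
  by_contra hxj
  have hj : j ∈ T (owner j) := howner j fun hbot => hxj ((mem_bot K).1 (hbot ▸ hxW j))
  have hsum : ∀ l, ∑ i : T (owner j),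
      v (owner j) i l • (if owner i = owner j then x i else 0) = 0 := fun l => by
    refine Eq.trans ?_ (hx ⟨owner j, l⟩)
    rw [← Finset.sum_subset (T (owner j)).subset_univ fun i _ hi => by simp [w, hi],
      ← Finset.sum_coe_sort (T (owner j))]
    exact Finset.sum_congr rfl fun i _ => by by_cases h : owner i = owner j <;> simp [w, h]
  have hy := hv (owner j) _ (fun i => by split_ifs; exacts [hxW i, zero_mem _]) hsum ⟨j, hj⟩
  exact hxj (by simpa using hy)

theorem hasIndepTensors_one_of_iSupIndep {W : J → Submodule K V} (hW : iSupIndep W) :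
    HasIndepTensors 1 W :=
  ⟨1, fun x hxW hx j => (iSupIndep_iff_finsetSum_eq_zero_imp_eq_zero W).1 hW Finset.univ x
    (fun j _ => hxW j) (by simpa using hx) j (Finset.mem_univ j)⟩

theorem hasIndepTensors_one_of_card_le_two {W : J → Submodule K V} (hJ : Fintype.card J ≤ 2)
    (hW : Pairwise (Function.onFun Disjoint W)) : HasIndepTensors 1 W := by
  refine hasIndepTensors_one_of_iSupIndep fun i => ?_
  by_cases hi : ∃ j, j ≠ i
  · obtain ⟨j, hji⟩ := hi
    have hpair : ∀ k, k = i ∨ k = j := fun k => by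
      by_contra! h
      exact hJ.not_gt (Fintype.two_lt_card_iff.2 ⟨i, j, k, hji.symm, h.1.symm, h.2.symm⟩)
    exact (iSupIndep_pair hji.symm hpair).2 (hW hji.symm) i
  · push Not at hi
    simp [hi]

theorem hasIndepTensors_one_of_card_le_one {J : Type*} {W : J → Submodule K V} {P : Finset J}
    (hP : P.card ≤ 1) : HasIndepTensors 1 fun j : P => W j :=
  hasIndepTensors_one_of_card_le_two (by simpa using hP.trans one_le_two) fun i j hij =>
    absurd (Subtype.ext (Finset.card_le_one.1 hP i i.2 j j.2)) hij

theorem hasIndepTensors_one_insert {J : Type*} {W : J → Submodule K V} {t : J} {P : Finset J}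
    (hP : P.card ≤ 1) (hW : ∀ j ∈ P, Disjoint (W t) (W j)) :
    HasIndepTensors 1 fun j : (insert t P : Finset J) => W j := by
  refine hasIndepTensors_one_of_card_le_two ?_ ?_
  · exact (Fintype.card_coe _).trans_le ((Finset.card_insert_le t P).trans (Nat.succ_le_succ hP))
  · rintro ⟨i, hi⟩ ⟨j, hj⟩ hij
    have hne : i ≠ j := fun h => hij (Subtype.ext h)
    rcases Finset.mem_insert.1 hi with rfl | hiP <;>
      rcases Finset.mem_insert.1 hj with rfl | hjP
    · exact absurd rfl hne
    · exact hW j hjP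
    · exact (hW i hiP).symm
    · exact absurd (Finset.card_le_one.1 hP i hiP j hjP) hne

theorem hasIndepTensors_one_of_linearIndependent {W : J → Submodule K V} {f : J → V}
    (hf : LinearIndependent K f) (hW : ∀ j, W j ≤ span K {f j}) : HasIndepTensors 1 W :=
  hasIndepTensors_one_of_iSupIndep (hf.iSupIndep_span_singleton.mono hW)

theorem sum_prod_sub_smul_eq_zero {τ : J → K} {x : J → V} {s : ℕ}
    (hx : ∀ l < s, ∑ j, τ j ^ l • x j = 0) {Z : Finset J} (hZ : Z.card < s) :
    ∑ j, (∏ k ∈ Z, (τ j - τ k)) • x j = 0 := by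
  set p : Polynomial K := ∏ k ∈ Z, (Polynomial.X - Polynomial.C (τ k)) with hp
  have hdeg : p.natDegree < s := by rwa [Polynomial.natDegree_finsetProd_X_sub_C_eq_card]
  have heval : ∀ j, ∏ k ∈ Z, (τ j - τ k) = ∑ l ∈ Finset.range s, p.coeff l * τ j ^ l := fun j => by
    rw [← Polynomial.eval_eq_sum_range' hdeg, hp, Polynomial.eval_prod]
    simp only [Polynomial.eval_sub, Polynomial.eval_X, Polynomial.eval_C]
  calc ∑ j, (∏ k ∈ Z, (τ j - τ k)) • x j
      = ∑ l ∈ Finset.range s, p.coeff l • ∑ j, τ j ^ l • x j := by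
        simp only [heval, Finset.sum_smul, Finset.smul_sum, mul_smul]
        exact Finset.sum_comm
    _ = 0 := Finset.sum_eq_zero fun l hl => by rw [hx l (Finset.mem_range.1 hl), smul_zero]

theorem prod_sub_ne_zero {J : Type*} {τ : J ↪ K} {i : J} {Z : Finset J} (hi : i ∉ Z) :
    ∏ k ∈ Z, (τ i - τ k) ≠ 0 :=
  Finset.prod_ne_zero_iff.2 fun _ hk =>
    sub_ne_zero.2 (τ.injective.ne (ne_of_mem_of_not_mem hk hi).symm)

theorem eq_zero_of_sum_pow_smul_eq_zero {τ : J ↪ K} {x : J → V} {s : ℕ}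
    (hx : ∀ l < s, ∑ j, τ j ^ l • x j = 0) (hs : Fintype.card J ≤ s) (i : J) : x i = 0 := by
  have hcard := Finset.card_erase_lt_of_mem (Finset.mem_univ i)
  have hsum := sum_prod_sub_smul_eq_zero hx (Z := Finset.univ.erase i) (hcard.trans_le hs)
  rw [Finset.sum_eq_single_of_mem i (Finset.mem_univ i) fun j _ hji => by
    rw [Finset.prod_eq_zero (i := j) (by simp [hji]) (sub_self _), zero_smul]] at hsum
  exact (smul_eq_zero.1 hsum).resolve_left (prod_sub_ne_zero (Finset.notMem_erase i _))

theorem mem_span_singleton_of_sum_pow_smul_eq_zero {τ : J ↪ K} {x : J → V} {s : ℕ}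
    (hx : ∀ l < s, ∑ j, τ j ^ l • x j = 0) (hs : Fintype.card J ≤ s + 1) {i j : J} (hij : i ≠ j) :
    x i ∈ span K {x j} := by
  set Z := (Finset.univ.erase i).erase j with hZ
  have hcard : Z.card + 1 + 1 = Fintype.card J := by
    rw [Finset.card_erase_add_one (by simp [hij.symm]), Finset.card_erase_add_one (by simp),
      Finset.card_univ]
  have hsum := sum_prod_sub_smul_eq_zero hx (Z := Z) (by omega)
  rw [Finset.sum_eq_add i j hij (fun k _ hk => by
    rw [Finset.prod_eq_zero (i := k) (by simp [hZ, hk]) (sub_self _), zero_smul])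
    (by simp) (by simp)] at hsum
  rw [← (span K {x j}).smul_mem_iff (prod_sub_ne_zero (τ := τ) (i := i) (Z := Z) (by simp [hZ])),
    eq_neg_of_add_eq_zero_left hsum]
  exact neg_mem (smul_mem _ _ (mem_span_singleton_self _))

-- The `v j` are taken on the moment curve: polynomials in the parameter isolate one or two of
-- the `x j`.
theorem hasIndepTensors_of_le_ker_of_linearIndependent [Infinite K] [FiniteDimensional K V]
    {W : J → Submodule K V} {f : J → Dual K V} (hf : LinearIndependent K f)
    (hW : ∀ j, W j ≤ LinearMap.ker (f j)) : HasIndepTensors (finrank K V - 1) W := by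
  let τ : J ↪ K := (Fintype.equivFin J).toEmbedding.trans
    (Fin.valEmbedding.trans (Infinite.natEmbedding K))
  refine ⟨fun j l => τ j ^ (l : ℕ), fun x hxW hx i => ?_⟩
  replace hx : ∀ l < finrank K V - 1, ∑ j, τ j ^ l • x j = 0 := fun l hl => hx ⟨l, hl⟩
  rcases (hf.fintype_card_le_finrank.trans_eq Subspace.dual_finrank_eq).lt_or_eq with hlt | heq
  · exact eq_zero_of_sum_pow_smul_eq_zero hx (by omega) i
  have hfx : ∀ j, f j (x i) = 0 := fun j => by
    rcases eq_or_ne i j with rfl | hij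
    · exact hW i (hxW i)
    · exact (span_singleton_le_iff_mem _ _).2 (hW j (hxW j))
        (mem_span_singleton_of_sum_pow_smul_eq_zero hx (by omega) hij)
  have hspan : span K (Set.range f) = ⊤ :=
    hf.span_eq_top_of_card_eq_finrank' (heq.trans Subspace.dual_finrank_eq.symm)
  have hle : span K (Set.range f) ≤ LinearMap.ker (Dual.eval K V (x i)) :=
    span_le.2 (Set.range_subset_iff.2 hfx)
  exact (forall_dual_apply_eq_zero_iff K (x i)).1 fun φ => hle (hspan ▸ mem_top)

end IndepTensors

section HallCondition

open Module Submodule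

variable {K V J : Type*} [Field K] [AddCommGroup V] [Module K V] [Fintype J]

/-- The dimension count that `HasIndepTensors r W` forces: `r * dim U` bounds the total dimension
of the parts of the `W j` inside `U`. -/
def HallCondition (r : ℕ) (W : J → Submodule K V) : Prop :=
  ∀ U : Submodule K V, ∑ j, finrank K ↥(W j ⊓ U) ≤ r * finrank K U

theorem IndepTensors.hallCondition [FiniteDimensional K V] {ρ : Type*} [Fintype ρ]
    {v : J → ρ → K} {W : J → Submodule K V} (hv : IndepTensors v W) :
    HallCondition (Fintype.card ρ) W := by
  intro U
  let Φ : ((j : J) → ↥(W j ⊓ U)) →ₗ[K] (ρ → U) := LinearMap.pi fun l =>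
    ∑ j, v j l • (inclusion inf_le_right ∘ₗ LinearMap.proj j)
  have hΦ : Function.Injective Φ := by
    refine (injective_iff_map_eq_zero Φ).2 fun x hx => funext fun j => Subtype.ext ?_
    refine hv (fun j => x j) (fun j => (x j).2.1) (fun l => ?_) j
    simpa [Φ] using congrArg (fun y : ρ → U => (y l : V)) hx
  simpa [finrank_pi_fintype] using LinearMap.finrank_le_finrank_of_injective hΦ

/-- The members of the family `W` are lines (indexed by `L`), hyperplanes (`H`), the whole space
(`T`) or zero (all other indices). -/
structure LineHyperplaneSorting (W : J → Submodule K V) (L H T : Finset J) : Prop where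
  isAtom : ∀ j ∈ L, IsAtom (W j)
  isCoatom : ∀ j ∈ H, IsCoatom (W j)
  eq_top : ∀ j ∈ T, W j = ⊤
  eq_bot : ∀ j, j ∉ L → j ∉ H → j ∉ T → W j = ⊥
  disjoint_LH : Disjoint L H
  disjoint_LT : Disjoint L T
  disjoint_HT : Disjoint H T

theorem exists_eq_ker_of_isCoatom {W : Submodule K V} (hW : IsCoatom W) :
    ∃ f : Dual K V, f ≠ 0 ∧ W = LinearMap.ker f := by
  obtain ⟨f, hf, hle⟩ := exists_le_ker_of_lt_top W hW.lt_top
  exact ⟨f, hf, ((hW.le_iff_eq (LinearMap.ker_eq_top.not.2 hf)).1 hle).symm⟩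

variable [FiniteDimensional K V]

theorem finrank_add_ite_le_of_isCoatom {W : Submodule K V} (hW : IsCoatom W) (U : Submodule K V) :
    finrank K U + (if U ≤ W then 1 else 0) ≤ finrank K ↥(W ⊓ U) + 1 := by
  split_ifs with hU
  · rw [inf_eq_right.2 hU]
  · have htop : W ⊔ U = ⊤ := hW.2 _ (left_lt_sup.2 hU)
    have hdim := finrank_sup_add_finrank_inf_eq W U
    obtain ⟨f, hf, hWf⟩ := exists_eq_ker_of_isCoatom hW
    have hcodim := Dual.finrank_ker_add_one_of_ne_zero hf
    rw [← hWf] at hcodim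
    rw [htop, finrank_top] at hdim
    omega

variable {W : J → Submodule K V} {L H T : Finset J} {r : ℕ}

theorem HallCondition.card_lines_add_card_hyperplanes_le (hr : HallCondition r W)
    (hW : LineHyperplaneSorting W L H T) (U : Submodule K V) :
    (L.filter fun j => W j ≤ U).card + (H.filter fun j => U ≤ W j).card +
      (H.card + T.card) * finrank K U ≤ H.card + r * finrank K U := by
  have hL : (L.filter fun j => W j ≤ U).card ≤ ∑ j ∈ L, finrank K ↥(W j ⊓ U) := by
    rw [Finset.card_filter]
    refine Finset.sum_le_sum fun j hj => ?_
    split_ifs with hjU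
    · rw [inf_eq_left.2 hjU]
      exact one_le_finrank_iff.2 (hW.isAtom j hj).1
    · exact Nat.zero_le _
  have hH : H.card * finrank K U + (H.filter fun j => U ≤ W j).card ≤
      ∑ j ∈ H, finrank K ↥(W j ⊓ U) + H.card := by
    rw [Finset.card_filter, ← smul_eq_mul, ← Finset.sum_const, ← Finset.sum_add_distrib,
      Finset.card_eq_sum_ones H, ← Finset.sum_add_distrib]
    exact Finset.sum_le_sum fun j hj => finrank_add_ite_le_of_isCoatom (hW.isCoatom j hj) U
  have hT : ∑ j ∈ T, finrank K ↥(W j ⊓ U) = T.card * finrank K U := by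
    rw [← smul_eq_mul, ← Finset.sum_const]
    exact Finset.sum_congr rfl fun j hj => by rw [hW.eq_top j hj, top_inf_eq]
  have hdisj := Finset.disjoint_union_left.2 ⟨hW.disjoint_LT, hW.disjoint_HT⟩
  have hsum : ∑ j ∈ (L ∪ H) ∪ T, finrank K ↥(W j ⊓ U) ≤ r * finrank K U :=
    (Finset.sum_le_univ_sum_of_nonneg fun _ => Nat.zero_le _).trans (hr U)
  rw [Finset.sum_union hdisj, Finset.sum_union hW.disjoint_LH] at hsum
  linarith

theorem ncard_setOf_coe {α : Type*} (s : Finset α) (q : α → Prop) [DecidablePred q] :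
    {a : s | q a}.ncard = (s.filter q).card := by
  rw [← Set.ncard_image_of_injective _ Subtype.val_injective, ← Set.ncard_coe_finset]
  congr 1
  ext a
  simp [and_comm]

theorem ncard_setOf_exists_sumElim_true {α J : Type*} [Finite α] (q : α → J → Prop) {X : Finset J}
    (hX : X.Nonempty) (N : ℕ) :
    {d : α ⊕ Fin N | ∃ x ∈ X, Sum.elim q (fun _ _ => True) d x}.ncard =
      {a | ∃ x ∈ X, q a x}.ncard + N := by
  have hunion : {d : α ⊕ Fin N | ∃ x ∈ X, Sum.elim q (fun _ _ => True) d x} =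
      Sum.inl '' {a | ∃ x ∈ X, q a x} ∪ Set.range Sum.inr := by
    ext (a | i)
    · simp
    · simpa [Finset.Nonempty] using hX
  rw [hunion, Set.ncard_union_eq Set.disjoint_image_inl_range_inr,
    Set.ncard_image_of_injective _ Sum.inl_injective, ← Set.image_univ,
    Set.ncard_image_of_injective _ Sum.inr_injective, Set.ncard_univ, Nat.card_fin]

theorem HallCondition.card_le_of_subset_lines (hr : HallCondition r W)
    (hW : LineHyperplaneSorting W L H T) {g : J → V} (hg : ∀ t ∈ L, W t = span K {g t}) {k : ℕ}
    (hk : r = H.card + T.card + k) {X : Finset J} (hX : X ⊆ L) :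
    X.card ≤ (H.filter fun e => ∃ t ∈ X, ¬ W t ≤ W e).card + k * finrank K (span K (g '' X)) := by
  set U := span K (g '' X)
  have hle : ∀ {E : Submodule K V}, U ≤ E ↔ ∀ t ∈ X, W t ≤ E := fun {E} => by
    refine span_le.trans (Set.image_subset_iff.trans (forall₂_congr fun t ht => ?_))
    rw [hg t (hX ht), span_singleton_le_iff_mem]
    rfl
  have hXU : X.card ≤ (L.filter fun t => W t ≤ U).card :=
    Finset.card_le_card fun t ht => Finset.mem_filter.2 ⟨hX ht, hle.1 le_rfl t ht⟩
  have hcompl := Finset.card_filter_add_card_filter_not (s := H) fun e => U ≤ W e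
  simp only [hle, not_forall, exists_prop] at hcompl
  have hcount := hr.card_lines_add_card_hyperplanes_le hW U
  simp only [hle (E := W _)] at hcount
  rw [hk] at hcount
  linarith

theorem HallCondition.card_le_of_subset_hyperplanes (hr : HallCondition r W)
    (hW : LineHyperplaneSorting W L H T) {f : J → Dual K V}
    (hf : ∀ x ∈ H, W x = LinearMap.ker (f x)) {k N : ℕ} (hk : H.card + T.card = r + k)
    (hN : H.card = L.card + k * finrank K V + N) {X : Finset J} (hX : X ⊆ H) :
    X.card ≤ (L.filter fun t => ∃ x ∈ X, ¬ W t ≤ W x).card + N +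
      k * finrank K (span K (f '' X)) := by
  set U := (span K (f '' X)).dualCoannihilator with hU
  have hle : ∀ {E : Submodule K V}, E ≤ U ↔ ∀ x ∈ X, E ≤ W x := fun {E} => by
    rw [hU, ← SetLike.coe_subset_coe, coe_dualCoannihilator_span]
    constructor
    · intro hE x hx y hy
      rw [hf x (hX hx)]
      exact hE hy (f x) ⟨x, hx, rfl⟩
    · rintro hE y hy _ ⟨x, hx, rfl⟩
      exact LinearMap.mem_ker.1 (hf x (hX hx) ▸ hE x hx hy)
  have hXU : X.card ≤ (H.filter fun x => U ≤ W x).card :=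
    Finset.card_le_card fun x hx => Finset.mem_filter.2 ⟨hX hx, hle.1 le_rfl x hx⟩
  have hcompl := Finset.card_filter_add_card_filter_not (s := L) fun t => W t ≤ U
  simp only [hle, not_forall, exists_prop] at hcompl
  have hcount := hr.card_lines_add_card_hyperplanes_le hW U
  have hrank : finrank K (span K (f '' X)) + finrank K U = finrank K V :=
    Subspace.finrank_add_finrank_dualCoannihilator_eq _
  simp only [hle] at hcount
  rw [hk] at hcount
  rw [← hrank] at hN
  linarith

theorem HallCondition.hasIndepTensors_of_card_le (hr : HallCondition r W)
    (hW : LineHyperplaneSorting W L H T) (hHT : H.card + T.card ≤ r) : HasIndepTensors r W := by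
  choose! g _ hg using fun t ht => (atom_iff_nonzero_span (W t)).1 (hW.isAtom t ht)
  obtain ⟨k, hk⟩ := Nat.exists_eq_add_of_le hHT
  let p : H → J → Prop := fun e t => ¬ W t ≤ W e
  have hmatch : ∀ X ⊆ L, X.card ≤ {e | ∃ t ∈ X, p e t}.ncard +
      k * finrank K (span K (g '' X)) := fun X hX => by
    rw [ncard_setOf_coe H fun e => ∃ t ∈ X, ¬ W t ≤ W e]
    exact hr.card_le_of_subset_lines hW hg hk hX
  obtain ⟨P, Q, hPQ, hP, hQ⟩ := exists_matching_and_colouring p g k hmatch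
  refine hasIndepTensors_of_cover (C := T ⊕ H ⊕ Fin k) (d := fun _ => 1)
    (T := Sum.elim (fun t => {(t : J)}) (Sum.elim (fun e => insert (e : J) (P e)) Q)) ?_ ?_ ?_
  · rintro (t | e | c)
    · exact hasIndepTensors_one_of_card_le_one (Finset.card_singleton _).le
    · refine hasIndepTensors_one_insert (hP e).1 fun t ht => ?_
      obtain ⟨htL, hte⟩ := (hP e).2 t ht
      exact ((hW.isAtom t htL).not_le_iff_disjoint.1 hte).symm
    · exact hasIndepTensors_one_of_linearIndependent (hQ c).2 fun t => (hg t ((hQ c).1 t.2)).le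
  · intro j hj
    by_cases hjT : j ∈ T
    · exact ⟨.inl ⟨j, hjT⟩, Finset.mem_singleton_self j⟩
    by_cases hjH : j ∈ H
    · exact ⟨.inr (.inl ⟨j, hjH⟩), Finset.mem_insert_self _ _⟩
    have hjL : j ∈ L := by_contra fun hjL => hj (hW.eq_bot j hjL hjH hjT)
    rcases hPQ j hjL with ⟨e, he⟩ | ⟨c, hc⟩
    · exact ⟨.inr (.inl e), Finset.mem_insert_of_mem he⟩
    · exact ⟨.inr (.inr c), hc⟩
  · simpa using (by omega : T.card + (H.card + k) ≤ r)

theorem HallCondition.exists_matching_and_colouring_hyperplanes (hr : HallCondition r W)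
    (hW : LineHyperplaneSorting W L H T) {f : J → Dual K V}
    (hf : ∀ x ∈ H, W x = LinearMap.ker (f x)) {k N : ℕ} (hk : H.card + T.card = r + k)
    (hN : H.card = L.card + k * finrank K V + N) :
    ∃ (P : L ⊕ Fin N → Finset J) (Q : Fin k → Finset J),
      (∀ j ∈ H, (∃ d, j ∈ P d) ∨ ∃ c, j ∈ Q c) ∧
      (∀ d, (P d).card ≤ 1) ∧
      (∀ t, ∀ x ∈ P (.inl t), ¬ W t ≤ W x) ∧
      ∀ c, Q c ⊆ H ∧ LinearIndepOn K f (Q c : Set J) := by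
  let p : L ⊕ Fin N → J → Prop := Sum.elim (fun t x => ¬ W t ≤ W x) fun _ _ => True
  have hmatch : ∀ X ⊆ H, X.card ≤ {d | ∃ x ∈ X, p d x}.ncard +
      k * finrank K (span K (f '' X)) := fun X hX => by
    rcases X.eq_empty_or_nonempty with rfl | hXne
    · simp
    rw [ncard_setOf_exists_sumElim_true _ hXne, ncard_setOf_coe L fun t => ∃ x ∈ X, ¬ W t ≤ W x]
    exact hr.card_le_of_subset_hyperplanes hW hf hk hN hX
  obtain ⟨P, Q, hPQ, hP, hQ⟩ := exists_matching_and_colouring p f k hmatch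
  exact ⟨P, Q, hPQ, fun d => (hP d).1, fun t x hx => ((hP _).2 x hx).2, hQ⟩

theorem HallCondition.hasIndepTensors_of_le_card [Infinite K] [Nontrivial V]
    (hr : HallCondition r W) (hW : LineHyperplaneSorting W L H T) (hHT : r ≤ H.card + T.card) :
    HasIndepTensors r W := by
  choose! f _ hf using fun x hx => exists_eq_ker_of_isCoatom (hW.isCoatom x hx)
  obtain ⟨k, hk⟩ := Nat.exists_eq_add_of_le hHT
  have htop : L.card + k * finrank K V ≤ H.card := by
    have := hr.card_lines_add_card_hyperplanes_le hW ⊤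
    rw [finrank_top, hk, Finset.filter_true_of_mem fun j _ => le_top] at this
    linarith
  obtain ⟨N, hN⟩ := Nat.exists_eq_add_of_le htop
  obtain ⟨P, Q, hPQ, hP, hPW, hQ⟩ := hr.exists_matching_and_colouring_hyperplanes hW hf hk hN
  refine hasIndepTensors_of_cover (C := T ⊕ (L ⊕ Fin N) ⊕ Fin k)
    (d := Sum.elim 1 (Sum.elim 1 fun _ => finrank K V - 1))
    (T := Sum.elim (fun t => {(t : J)})
      (Sum.elim (Sum.elim (fun t => insert (t : J) (P (.inl t))) fun i => P (.inr i)) Q)) ?_ ?_ ?_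
  · rintro (t | (t | i) | c)
    · exact hasIndepTensors_one_of_card_le_one (Finset.card_singleton _).le
    · exact hasIndepTensors_one_insert (hP _) fun x hx =>
        (hW.isAtom t t.2).not_le_iff_disjoint.1 (hPW t x hx)
    · exact hasIndepTensors_one_of_card_le_one (hP _)
    · exact hasIndepTensors_of_le_ker_of_linearIndependent (hQ c).2
        fun x => (hf x ((hQ c).1 x.2)).le
  · intro j hj
    by_cases hjT : j ∈ T
    · exact ⟨.inl ⟨j, hjT⟩, Finset.mem_singleton_self j⟩
    by_cases hjL : j ∈ L
    · exact ⟨.inr (.inl (.inl ⟨j, hjL⟩)), Finset.mem_insert_self _ _⟩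
    have hjH : j ∈ H := by_contra fun hjH => hj (hW.eq_bot j hjL hjH hjT)
    rcases hPQ j hjH with ⟨t | i, hd⟩ | ⟨c, hc⟩
    · exact ⟨.inr (.inl (.inl t)), Finset.mem_insert_of_mem hd⟩
    · exact ⟨.inr (.inl (.inr i)), hd⟩
    · exact ⟨.inr (.inr c), hc⟩
  · obtain ⟨d, hd⟩ := Nat.exists_eq_add_of_le' (finrank_pos (R := K) (M := V))
    rw [hd] at hN
    simpa [hd] using (by linarith : T.card + (L.card + N + k * d) ≤ r)

theorem HallCondition.hasIndepTensors [Infinite K] (hr : HallCondition r W)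
    (hW : ∀ j, W j = ⊥ ∨ IsAtom (W j) ∨ IsCoatom (W j) ∨ W j = ⊤) : HasIndepTensors r W := by
  rcases subsingleton_or_nontrivial V with hV | hV
  · exact hasIndepTensors_of_forall_eq_bot (fun j => Subsingleton.elim _ _) r
  have hsort : LineHyperplaneSorting W (Finset.univ.filter fun j => IsAtom (W j))
      (Finset.univ.filter fun j => IsCoatom (W j) ∧ ¬ IsAtom (W j))
      (Finset.univ.filter fun j => W j = ⊤ ∧ ¬ IsAtom (W j)) := by
    constructor
    all_goals simp only [Finset.disjoint_left, Finset.mem_filter, Finset.mem_univ, true_and]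
    · exact fun j h => h
    · exact fun j h => h.1
    · exact fun j h => h.1
    · intro j
      have := hW j
      tauto
    · tauto
    · tauto
    · exact fun j h h' => h.1.1 h'.1
  rcases le_total (_ : ℕ) r with h | h
  · exact hr.hasIndepTensors_of_card_le hsort h
  · exact hr.hasIndepTensors_of_le_card hsort h

end HallCondition

section Specialization

variable {ι κ R K L : Type*} [Finite κ] [CommRing R] [Field K] [Field L]

theorem exists_det_submatrix_ne_zero [Fintype ι] {A : Matrix ι κ L}
    (hA : LinearIndependent L A.row) :
    ∃ e : ι → κ, (A.submatrix id e).det ≠ 0 := by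
  have := Fintype.ofFinite κ
  obtain ⟨κ', a, ha, hspan, hcol⟩ := exists_linearIndependent' L A.col
  have : Fintype κ' := @Fintype.ofFinite _ (Finite.of_injective a ha)
  have hcard : Fintype.card ι = Fintype.card κ' := by
    rw [← hA.rank_matrix, Matrix.rank_eq_finrank_span_cols, ← hspan, finrank_span_eq_card hcol]
  let e := Fintype.equivOfCardEq hcard
  have hcols : LinearIndependent L (A.submatrix id (a ∘ e)).col := hcol.comp e e.injective
  rw [Matrix.linearIndependent_cols_iff_isUnit, Matrix.isUnit_iff_isUnit_det] at hcols
  exact ⟨a ∘ e, hcols.ne_zero⟩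

theorem linearIndependent_algebraMap_of_map [Finite ι] [IsDomain R] [Algebra R K]
    [IsFractionRing R K]
    (φ : R →+* L) (M : Matrix ι κ R) (hM : LinearIndependent L fun i k => φ (M i k)) :
    LinearIndependent K fun i k => algebraMap R K (M i k) := by
  have := Fintype.ofFinite ι
  obtain ⟨e, he⟩ := exists_det_submatrix_ne_zero (A := M.map φ) hM
  have hdet : (M.submatrix id e).det ≠ 0 := fun h => he <| by
    rw [Matrix.submatrix_map, ← RingHom.mapMatrix_apply, ← RingHom.map_det, h, map_zero]
  have hdetK : ((M.submatrix id e).map (algebraMap R K)).det ≠ 0 := by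
    rw [← RingHom.mapMatrix_apply, ← RingHom.map_det]
    exact (map_ne_zero_iff _ (IsFractionRing.injective R K)).2 hdet
  exact (Matrix.linearIndependent_rows_of_det_ne_zero hdetK).of_comp (LinearMap.funLeft K K e)

end Specialization

section TensorFamily

open Module Submodule

variable {K I J κ ρ : Type*} [Field K] [Finite I] [Fintype J] {u : I → κ → K} {v : J → ρ → K}
  {N : J → Finset I}

theorem linearIndepOn_tensor_iff_forall_sum_eq_zero :
    LinearIndepOn K (fun (p : I × J) (x : κ × ρ) => u p.1 x.1 * v p.2 x.2) {p | p.1 ∈ N p.2} ↔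
      ∀ c : J → I → K, (∀ l, ∑ j, v j l • ∑ i ∈ N j, c j i • u i = 0) →
        ∀ j, ∀ i ∈ N j, c j i = 0 := by
  have := Fintype.ofFinite I
  let E : Finset (I × J) := Finset.univ.filter fun p => p.1 ∈ N p.2
  have hE : {p | p.1 ∈ N p.2} = (E : Set (I × J)) := by simp [E]
  have hsum : ∀ c : I × J → K, (∑ p ∈ E,
      c p • fun x : κ × ρ => u p.1 x.1 * v p.2 x.2) = 0 ↔
        ∀ l, ∑ j, v j l • ∑ i ∈ N j, c (i, j) • u i = 0 := fun c => by
    rw [Finset.sum_finset_product_right _ Finset.univ N (by simp [E])]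
    simp only [funext_iff, Prod.forall, Finset.sum_apply, Pi.smul_apply, Pi.zero_apply,
      smul_eq_mul, Finset.mul_sum]
    rw [forall_comm]
    refine forall₂_congr fun l k => ?_
    simp only [mul_left_comm (v _ l), mul_comm (v _ l)]
  rw [hE, linearIndepOn_finset_iff]
  simp only [hsum, E, Finset.mem_filter, Finset.mem_univ, true_and, Prod.forall]
  exact ⟨fun h c hc j i => h (fun p => c p.2 p.1) hc i j,
    fun h c hc i j => h (fun j i => c (i, j)) hc j i⟩

theorem linearIndepOn_tensor_iff :
    LinearIndepOn K (fun (p : I × J) (x : κ × ρ) => u p.1 x.1 * v p.2 x.2) {p | p.1 ∈ N p.2} ↔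
      (∀ j, LinearIndepOn K u (N j : Set I)) ∧ IndepTensors v fun j => span K (u '' N j) := by
  simp only [linearIndepOn_finset_iff, linearIndepOn_tensor_iff_forall_sum_eq_zero]
  constructor
  · intro h
    constructor
    · intro j c hc i hi
      simpa using h (Pi.single j c) (fun l => Finset.sum_eq_zero fun j' _ => by
        rcases eq_or_ne j' j with rfl | hne
        · simp [hc]
        · simp [hne]) j i hi
    · intro x hxN hx j
      choose c hc using fun j => (mem_span_image_finset_iff_exists_fun K).1 (hxN j)
      let c' : J → I → K := fun j i => if h : i ∈ N j then c j ⟨i, h⟩ else 0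
      have hc' : ∀ j, ∑ i ∈ N j, c' j i • u i = x j := fun j => by
        rw [← hc j, ← Finset.sum_coe_sort]
        simp [c']
      rw [← hc' j]
      exact Finset.sum_eq_zero fun i hi => by
        rw [h c' (by simpa only [hc'] using hx) j i hi, zero_smul]
  · rintro ⟨hu, hv⟩ c hc j
    exact hu j (c j) (hv _ (fun j => sum_mem fun i hi => smul_mem _ _ (subset_span ⟨i, hi, rfl⟩))
      hc j)

end TensorFamily

section GenericVectors

open Module Submodule

variable {F : Type*} [Field F] {m n s r : ℕ}

/-- The generic vector `u_i = (X_{ik})_k`, the left factor of `tvec`. -/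
def genericLeft (F : Type*) [Field F] (m n s r : ℕ) (i : Fin m) : Fin s → TField F m n s r :=
  fun k => algebraMap (MvPolynomial ((Fin m × Fin s) ⊕ (Fin n × Fin r)) F) _
    (MvPolynomial.X (Sum.inl (i, k)))

/-- The generic vector `v_j = (Y_{jl})_l`, the right factor of `tvec`. -/
def genericRight (F : Type*) [Field F] (m n s r : ℕ) (j : Fin n) : Fin r → TField F m n s r :=
  fun l => algebraMap (MvPolynomial ((Fin m × Fin s) ⊕ (Fin n × Fin r)) F) _
    (MvPolynomial.X (Sum.inr (j, l)))

theorem tensorIndep_iff_linearIndepOn {E : Set (Fin m × Fin n)} :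
    TensorIndep F m n s r E ↔ LinearIndepOn (TField F m n s r) (fun p (x : Fin s × Fin r) =>
      genericLeft F m n s r p.1 x.1 * genericRight F m n s r p.2 x.2) E :=
  Iff.rfl

theorem tensorIndep_iff {N : Fin n → Finset (Fin m)} :
    TensorIndep F m n s r {p | p.1 ∈ N p.2} ↔
      (∀ j, LinearIndepOn (TField F m n s r) (genericLeft F m n s r) (N j : Set (Fin m))) ∧
        HasIndepTensors r fun j => span (TField F m n s r) (genericLeft F m n s r '' N j) := by
  rw [tensorIndep_iff_linearIndepOn]
  constructor
  · rw [linearIndepOn_tensor_iff]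
    exact fun h => ⟨h.1, _, h.2⟩
  · rintro ⟨hu, v, hv⟩
    let φ : MvPolynomial ((Fin m × Fin s) ⊕ (Fin n × Fin r)) F →+* TField F m n s r :=
      MvPolynomial.eval₂Hom (algebraMap F _)
        (Sum.elim (fun x => genericLeft F m n s r x.1 x.2) fun y => v y.1 y.2)
    have hspec := linearIndependent_algebraMap_of_map (K := TField F m n s r) φ
      (fun (p : {p : Fin m × Fin n | p.1 ∈ N p.2}) (x : Fin s × Fin r) =>
        MvPolynomial.X (Sum.inl (p.1.1, x.1)) * MvPolynomial.X (Sum.inr (p.1.2, x.2)))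
    simp only [map_mul, φ, MvPolynomial.eval₂Hom_X', Sum.elim_inl, Sum.elim_inr] at hspec
    exact hspec (linearIndepOn_tensor_iff.2 ⟨hu, hv⟩)

theorem linearIndepOn_genericLeft_tensor {J ρ : Type*} [Fintype J] [Finite ρ]
    {a : Fin m → Fin s → F} {b : J → ρ → F} {N : J → Finset (Fin m)}
    (ha : ∀ j, LinearIndepOn F a (N j : Set (Fin m)))
    (hb : IndepTensors b fun j => span F (a '' N j)) :
    (∀ j, LinearIndepOn (TField F m n s r) (genericLeft F m n s r) (N j : Set (Fin m))) ∧
      IndepTensors (fun j l => algebraMap F (TField F m n s r) (b j l))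
        fun j => span (TField F m n s r) (genericLeft F m n s r '' N j) := by
  let φ : MvPolynomial ((Fin m × Fin s) ⊕ (Fin n × Fin r)) F →+* F :=
    MvPolynomial.eval₂Hom (RingHom.id F) (Sum.elim (fun x => a x.1 x.2) 0)
  have hspec := linearIndependent_algebraMap_of_map (K := TField F m n s r) φ
    (fun (p : {p : Fin m × J | p.1 ∈ N p.2}) (x : Fin s × ρ) =>
      MvPolynomial.X (Sum.inl (p.1.1, x.1)) * MvPolynomial.C (b p.1.2 x.2))
  simp only [map_mul, φ, MvPolynomial.eval₂Hom_X', MvPolynomial.eval₂Hom_C, Sum.elim_inl,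
    RingHom.id_apply] at hspec
  exact linearIndepOn_tensor_iff.1 (hspec (linearIndepOn_tensor_iff.2 ⟨ha, hb⟩))

theorem linearIndepOn_single {I κ : Type*} [DecidableEq κ] {π : I → κ} {S : Set I}
    (hπ : Set.InjOn π S) : LinearIndepOn F (fun i => (Pi.single (π i) 1 : κ → F)) S :=
  (Pi.linearIndependent_single_one κ F).comp (fun i : S => π i) hπ.injective

theorem linearIndepOn_genericLeft_iff {N : Finset (Fin m)} :
    LinearIndepOn (TField F m n s r) (genericLeft F m n s r) (N : Set (Fin m)) ↔ N.card ≤ s := by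
  refine ⟨fun h => ?_, fun hN => ?_⟩
  · simpa using LinearIndependent.fintype_card_le_finrank h
  rcases N.eq_empty_or_nonempty with rfl | hne
  · simp
  have : Nonempty (Fin s) := Fin.pos_iff_nonempty.1 (hne.card_pos.trans_le hN)
  obtain ⟨π, -, hπ⟩ := N.finite_toSet.exists_injOn_of_encard_le (t := (Set.univ : Set (Fin s)))
    (by simpa using hN)
  exact (linearIndepOn_genericLeft_tensor (J := Unit) (ρ := Unit) (b := 1) (N := fun _ => N)
    (fun _ => linearIndepOn_single hπ) fun x _ hx _ => by simpa using hx ()).1 ()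

end GenericVectors

section GeneralPosition

open Module Submodule

/-- The subspace spanned by the points `u i` with `i ∈ N`. -/
def flat (K : Type*) {V I : Type*} [Field K] [AddCommGroup V] [Module K V] (u : I → V)
    (N : Finset I) : Submodule K V :=
  span K (u '' N)

/-- Points of a projective plane in general position: no three are collinear, and the lines
spanned by three disjoint pairs are not concurrent. -/
structure GeneralPosition (K : Type*) {V I : Type*} [Field K] [AddCommGroup V] [Module K V]
    (u : I → V) : Prop where
  finrank_eq : finrank K V = 3
  linearIndepOn : ∀ N : Finset I, N.card ≤ 3 → LinearIndepOn K u (N : Set I)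
  inf_eq_bot : ∀ N M L : Finset I, N.card = 2 → M.card = 2 → L.card = 2 →
    Disjoint N M → Disjoint N L → Disjoint M L → flat K u N ⊓ flat K u M ⊓ flat K u L = ⊥

theorem indepTensors_triple_iff {K V : Type*} [Field K] [AddCommGroup V] [Module K V]
    {W : Fin 3 → Submodule K V} :
    IndepTensors ![![(1 : K), 1], ![1, 0], ![0, 1]] W ↔ W 0 ⊓ W 1 ⊓ W 2 = ⊥ := by
  refine ⟨fun h => eq_bot_iff.2 ?_, fun h x hx hsum => ?_⟩
  · rintro x ⟨⟨h0, h1⟩, h2⟩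
    have hsum : ∀ l, ∑ j, (![![(1 : K), 1], ![1, 0], ![0, 1]] j l) • ![x, -x, -x] j = 0 :=
      Fin.forall_fin_two.2 ⟨by simp [Fin.sum_univ_three], by simp [Fin.sum_univ_three]⟩
    exact h ![x, -x, -x] (by simp_all [Fin.forall_fin_succ]) hsum 0
  · have h1 : x 1 = -x 0 :=
      eq_neg_of_add_eq_zero_right (by simpa [Fin.sum_univ_three] using hsum 0)
    have h2 : x 2 = -x 0 :=
      eq_neg_of_add_eq_zero_right (by simpa [Fin.sum_univ_three] using hsum 1)
    have h0 : x 0 ∈ W 0 ⊓ W 1 ⊓ W 2 :=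
      ⟨⟨hx 0, neg_mem_iff.1 (h1 ▸ hx 1)⟩, neg_mem_iff.1 (h2 ▸ hx 2)⟩
    rw [h, mem_bot] at h0
    exact Fin.forall_fin_succ.2 ⟨h0, Fin.forall_fin_two.2 ⟨by simp [h1, h0], by simp [h2, h0]⟩⟩

theorem apply_eq_zero_of_mem_span_single {F I κ : Type*} [Field F] [DecidableEq κ] {π : I → κ}
    {S : Set I} {k : κ} (hk : ∀ i ∈ S, π i ≠ k) {x : κ → F}
    (hx : x ∈ span F ((fun i => (Pi.single (π i) 1 : κ → F)) '' S)) : x k = 0 := by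
  have hle : span F ((fun i => (Pi.single (π i) 1 : κ → F)) '' S) ≤
      LinearMap.ker (LinearMap.proj k : (κ → F) →ₗ[F] F) := by
    refine span_le.2 ?_
    rintro _ ⟨i, hi, rfl⟩
    exact Pi.single_eq_of_ne' (hk i hi) 1
  exact hle hx

theorem exists_colouring_of_disjoint_pairs {I : Type*} {N M L : Finset I} (hN : N.card = 2)
    (hM : M.card = 2) (hL : L.card = 2) (hNM : Disjoint N M) (hNL : Disjoint N L)
    (hML : Disjoint M L) : ∃ π : I → Fin 3,
      ∀ j, Set.InjOn π (![N, M, L] j) ∧ ∀ i ∈ ![N, M, L] j, π i ≠ ![2, 1, 0] j := by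
  obtain ⟨a, b, _, rfl⟩ := Finset.card_eq_two.1 hN
  obtain ⟨c, d, _, rfl⟩ := Finset.card_eq_two.1 hM
  obtain ⟨e, f, _, rfl⟩ := Finset.card_eq_two.1 hL
  refine ⟨fun i => if i = a ∨ i = c then 0 else if i = b ∨ i = e then 1 else 2, ?_⟩
  simp only [Finset.disjoint_insert_left, Finset.disjoint_singleton_left, Finset.mem_insert,
    Finset.mem_singleton, not_or] at hNM hNL hML
  simp only [Fin.forall_fin_succ, IsEmpty.forall_iff, and_true, Fin.succ_zero_eq_one,
    Fin.succ_one_eq_two, Matrix.cons_val, Set.InjOn, Finset.mem_coe, Finset.mem_insert,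
    Finset.mem_singleton]
  grind

-- Send `u` to basis vectors so that the three lines become the coordinate lines `x₂ = 0`,
-- `x₁ = 0` and `x₀ = 0`, which are not concurrent; by `indepTensors_triple_iff` this lifts to the
-- generic `u`.
theorem generalPosition_genericLeft (F : Type*) [Field F] (m n r : ℕ) :
    GeneralPosition (TField F m n 3 r) (genericLeft F m n 3 r) where
  finrank_eq := by rw [finrank_fin_fun]
  linearIndepOn N hN := linearIndepOn_genericLeft_iff.2 hN
  inf_eq_bot N M L hN hM hL hNM hNL hML := by
    obtain ⟨π, hπ⟩ := exists_colouring_of_disjoint_pairs hN hM hL hNM hNL hML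
    have hspecial : IndepTensors ![![(1 : F), 1], ![1, 0], ![0, 1]]
        fun j => span F ((fun i => (Pi.single (π i) 1 : Fin 3 → F)) '' ![N, M, L] j) := by
      refine indepTensors_triple_iff.2 (eq_bot_iff.2 ?_)
      rintro x ⟨⟨hxN, hxM⟩, hxL⟩
      refine funext (Fin.forall_fin_succ.2 ⟨?_, Fin.forall_fin_two.2 ⟨?_, ?_⟩⟩)
      · exact apply_eq_zero_of_mem_span_single (hπ 2).2 hxL
      · exact apply_eq_zero_of_mem_span_single (hπ 1).2 hxM
      · exact apply_eq_zero_of_mem_span_single (hπ 0).2 hxN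
    have hgeneric := (linearIndepOn_genericLeft_tensor (n := n) (r := r)
      (fun j => linearIndepOn_single (hπ j).1) hspecial).2
    have hcoeff : (fun j l => algebraMap F (TField F m n 3 r)
        ((![![1, 1], ![1, 0], ![0, 1]] : Fin 3 → Fin 2 → F) j l)) =
          ![![1, 1], ![1, 0], ![0, 1]] := by
      ext j l
      fin_cases j <;> fin_cases l <;> simp
    exact indepTensors_triple_iff.1 (hcoeff ▸ hgeneric)

end GeneralPosition

section Flats

open Module Submodule

variable {K V I : Type*} [Field K] [AddCommGroup V] [Module K V] {u : I → V} {N M L : Finset I}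

theorem flat_mono (h : N ⊆ M) : flat K u N ≤ flat K u M :=
  span_mono (Set.image_mono (Finset.coe_subset.2 h))

theorem flat_le_iff {U : Submodule K V} : flat K u N ≤ U ↔ ∀ i ∈ N, u i ∈ U := by
  rw [flat, span_le, Set.image_subset_iff]
  exact Iff.rfl

theorem apply_mem_flat {i : I} (hi : i ∈ N) : u i ∈ flat K u N :=
  flat_le_iff.1 le_rfl i hi

theorem flat_union [DecidableEq I] : flat K u (N ∪ M) = flat K u N ⊔ flat K u M := by
  rw [flat, Finset.coe_union, Set.image_union, span_union, flat, flat]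

namespace GeneralPosition

theorem finiteDimensional (hu : GeneralPosition K u) : FiniteDimensional K V :=
  FiniteDimensional.of_finrank_pos (hu.finrank_eq ▸ Nat.succ_pos 2)

theorem finrank_flat_of_card_le (hu : GeneralPosition K u) (hN : N.card ≤ 3) :
    finrank K (flat K u N) = N.card := by
  have h := finrank_span_eq_card (hu.linearIndepOn N hN)
  rw [← Set.image_eq_range] at h
  exact h.trans (Fintype.card_coe N)

theorem finrank_flat (hu : GeneralPosition K u) : finrank K (flat K u N) = min N.card 3 := by
  have := hu.finiteDimensional
  rcases le_total N.card 3 with hN | hN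
  · rw [hu.finrank_flat_of_card_le hN, min_eq_left hN]
  obtain ⟨T, hTN, hT⟩ := Finset.exists_subset_card_eq hN
  rw [min_eq_right hN]
  refine le_antisymm (hu.finrank_eq ▸ finrank_le _) ?_
  rw [← hT, ← hu.finrank_flat_of_card_le hT.le]
  exact finrank_mono (flat_mono hTN)

theorem flat_eq_top (hu : GeneralPosition K u) (hN : N.card = 3) : flat K u N = ⊤ := by
  have := hu.finiteDimensional
  exact eq_top_of_finrank_eq (by rw [hu.finrank_flat_of_card_le hN.le, hN, hu.finrank_eq])

theorem flat_eq_bot_or_isAtom_or_isCoatom_or_eq_top (hu : GeneralPosition K u) (N : Finset I) :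
    flat K u N = ⊥ ∨ IsAtom (flat K u N) ∨ IsCoatom (flat K u N) ∨ flat K u N = ⊤ := by
  have := hu.finiteDimensional
  have htop : ∀ {U : Submodule K V}, finrank K U = 3 → U = ⊤ := fun hU =>
    eq_top_of_finrank_eq (hU.trans hu.finrank_eq.symm)
  have hle : finrank K (flat K u N) ≤ 3 := hu.finrank_eq ▸ finrank_le _
  interval_cases hN : finrank K (flat K u N)
  · exact Or.inl (finrank_eq_zero.1 hN)
  · exact Or.inr (Or.inl (isAtom_iff_finrank_eq_one.2 hN))
  · refine Or.inr (Or.inr (Or.inl ⟨fun h => ?_, fun U hU => htop ?_⟩))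
    · rw [h, finrank_top, hu.finrank_eq] at hN
      omega
    · have hlt := finrank_lt_finrank_of_lt hU
      have hle := hu.finrank_eq ▸ finrank_le U
      omega
  · exact Or.inr (Or.inr (Or.inr (htop hN)))

theorem eq_flat (hu : GeneralPosition K u) {U : Submodule K V} (hU : finrank K U = N.card)
    (hN : ∀ i ∈ N, u i ∈ U) : U = flat K u N := by
  have := hu.finiteDimensional
  have hcard : N.card ≤ 3 := hU ▸ hu.finrank_eq ▸ finrank_le U
  refine (eq_of_le_of_finrank_eq (flat_le_iff.2 hN) ?_).symm
  rw [hU, hu.finrank_flat_of_card_le hcard]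

theorem finrank_flat_inf_flat [DecidableEq I] (hu : GeneralPosition K u) :
    finrank K ↥(flat K u N ⊓ flat K u M) + min (N ∪ M).card 3 = min N.card 3 + min M.card 3 := by
  have := hu.finiteDimensional
  rw [← hu.finrank_flat, ← hu.finrank_flat, ← hu.finrank_flat, flat_union, add_comm,
    finrank_sup_add_finrank_inf_eq]

theorem flat_inf_flat [DecidableEq I] (hu : GeneralPosition K u) (h : (N ∪ M).card ≤ 3) :
    flat K u N ⊓ flat K u M = flat K u (N ∩ M) := by
  have := hu.finiteDimensional
  refine (eq_of_le_of_finrank_eq (le_inf (flat_mono Finset.inter_subset_left)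
    (flat_mono Finset.inter_subset_right)) ?_).symm
  have hinf := hu.finrank_flat_inf_flat (N := N) (M := M)
  have hcard := Finset.card_union_add_card_inter N M
  have hN := Finset.card_le_card (Finset.subset_union_left (s₁ := N) (s₂ := M))
  have hM := Finset.card_le_card (Finset.subset_union_right (s₁ := N) (s₂ := M))
  rw [hu.finrank_flat]
  omega

theorem disjoint_of_le_flat (hu : GeneralPosition K u) {U : Submodule K V} (hU : finrank K U = 1)
    (hmem : ∀ i, u i ∉ U) (hN : N.card = 2) (hM : M.card = 2) (hUN : U ≤ flat K u N)
    (hUM : U ≤ flat K u M) (hne : N ≠ M) : Disjoint N M := by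
  have := hu.finiteDimensional
  by_contra hdisj
  obtain ⟨i, hiN, hiM⟩ := Finset.not_disjoint_iff.1 hdisj
  have hinter : 0 < (N ∩ M).card := Finset.card_pos.2 ⟨i, Finset.mem_inter.2 ⟨hiN, hiM⟩⟩
  have hcard := Finset.card_union_add_card_inter N M
  have hle : U ≤ flat K u (N ∩ M) := (le_inf hUN hUM).trans_eq (hu.flat_inf_flat (by omega))
  have hlt : (N ∩ M).card < 2 := by
    by_contra! h2
    have hNinter : N ∩ M = N := Finset.eq_of_subset_of_card_le Finset.inter_subset_left (by omega)
    have hMinter : N ∩ M = M := Finset.eq_of_subset_of_card_le Finset.inter_subset_right (by omega)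
    exact hne (hNinter.symm.trans hMinter)
  refine hmem i ?_
  rw [eq_of_le_of_finrank_eq hle (by rw [hU, hu.finrank_flat_of_card_le] <;> omega)]
  exact apply_mem_flat (Finset.mem_inter.2 ⟨hiN, hiM⟩)

theorem eq_or_eq_of_le_flat (hu : GeneralPosition K u) {U : Submodule K V}
    (hU : finrank K U = 1) (hmem : ∀ i, u i ∉ U) (hN : N.card = 2) (hM : M.card = 2)
    (hL : L.card = 2) (hUN : U ≤ flat K u N) (hUM : U ≤ flat K u M) (hUL : U ≤ flat K u L)
    (hNM : N ≠ M) : L = N ∨ L = M := by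
  by_contra! hne
  have hbot : U ≤ ⊥ := by
    rw [← hu.inf_eq_bot N M L hN hM hL (hu.disjoint_of_le_flat hU hmem hN hM hUN hUM hNM)
      (hu.disjoint_of_le_flat hU hmem hN hL hUN hUL hne.1.symm)
      (hu.disjoint_of_le_flat hU hmem hM hL hUM hUL hne.2.symm)]
    exact le_inf (le_inf hUN hUM) hUL
  rw [le_bot_iff.1 hbot, finrank_bot] at hU
  exact zero_ne_one hU

end GeneralPosition

end Flats

section ColumnCounts

open Module Submodule

variable {m n : ℕ} {A : Fin m → Finset (Fin n)}

/-- The row indices `i` with `j ∈ A i`, that is, the fibre over `j` of the set `⋃ i, {i} × A i`. -/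
def column (A : Fin m → Finset (Fin n)) (j : Fin n) : Finset (Fin m) :=
  Finset.univ.filter fun i => j ∈ A i

theorem mem_column {i : Fin m} {j : Fin n} : i ∈ column A j ↔ j ∈ A i := by
  rw [column, Finset.mem_filter_univ]

theorem mem_smult {k : ℕ} {j : Fin n} : j ∈ Smult A k ↔ (column A j).card = k := by
  rw [Smult, Finset.mem_filter_univ, column]

theorem card_eq_sum_ite_mem {J : Type*} [Fintype J] [DecidableEq J] (s : Finset J) :
    s.card = ∑ j, if j ∈ s then 1 else 0 := by
  simp

theorem sum_card_column (hA : ∀ j, (column A j).card ≤ 3) :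
    ∑ j, (column A j).card =
      (Smult A 1).card + 2 * (Smult A 2).card + 3 * (Smult A 3).card := by
  simp only [card_eq_sum_ite_mem (Smult A _), Finset.mul_sum, ← Finset.sum_add_distrib]
  refine Finset.sum_congr rfl fun j _ => ?_
  have := hA j
  simp only [mem_smult]
  split_ifs <;> omega

theorem card_union_pair_add {I : Type*} [DecidableEq I] {a b : I} (hab : a ≠ b) (N : Finset I) :
    (N ∪ {a, b}).card + ((if a ∈ N then 1 else 0) + if b ∈ N then 1 else 0) = N.card + 2 := by
  have h := Finset.card_union_add_card_inter N {a, b}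
  have hinter : (N ∩ {a, b}).card = (if a ∈ N then 1 else 0) + if b ∈ N then 1 else 0 := by
    rw [Finset.inter_comm]
    by_cases ha : a ∈ N <;> by_cases hb : b ∈ N <;>
      simp [Finset.insert_inter_of_mem, Finset.insert_inter_of_notMem, ha, hb, hab]
  rw [Finset.card_pair hab] at h
  omega

variable {K V : Type*} [Field K] [AddCommGroup V] [Module K V] {u : Fin m → V}

theorem card_points_on_line_add_le {U : Submodule K V} {r : ℕ}
    (hmem : ∀ a b, a ≠ b → u a ∈ U → u b ∉ U)
    (hpoint : ∀ i, (A i \ Smult A 3).card + (Smult A 3).card ≤ r)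
    (hsmult : (Smult A 3).card ≤ r) :
    ((Smult A 1).filter fun j => flat K u (column A j) ≤ U).card + (Smult A 3).card ≤ r := by
  set X := (Smult A 1).filter fun j => flat K u (column A j) ≤ U
  rcases X.eq_empty_or_nonempty with hempty | ⟨j, hj⟩
  · rwa [hempty, Finset.card_empty, zero_add]
  obtain ⟨hj1, hjU⟩ := Finset.mem_filter.1 hj
  obtain ⟨a, hcol⟩ := Finset.card_eq_one.1 (mem_smult.1 hj1)
  have hsub : X ⊆ A a \ Smult A 3 := fun k hk => by
    obtain ⟨hk1, hkU⟩ := Finset.mem_filter.1 hk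
    rw [mem_smult] at hk1
    obtain ⟨b, hcol'⟩ := Finset.card_eq_one.1 hk1
    have hba : b = a := by
      by_contra hba
      rw [hcol, flat_le_iff] at hjU
      rw [hcol', flat_le_iff] at hkU
      exact hmem b a hba (hkU b (by simp)) (hjU a (by simp))
    rw [Finset.mem_sdiff, ← mem_column, mem_smult, hk1, hcol', hba]
    simp
  exact (Nat.add_le_add_right (Finset.card_le_card hsub) _).trans (hpoint a)

namespace GeneralPosition

theorem sum_finrank_inf_top (hu : GeneralPosition K u) (hA : ∀ j, (column A j).card ≤ 3) :
    ∑ j, finrank K ↥(flat K u (column A j) ⊓ ⊤) =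
      (Smult A 1).card + 2 * (Smult A 2).card + 3 * (Smult A 3).card := by
  rw [← sum_card_column hA]
  exact Finset.sum_congr rfl fun j _ => by rw [inf_top_eq, hu.finrank_flat_of_card_le (hA j)]

theorem sum_finrank_inf_point (hu : GeneralPosition K u) (hA : ∀ j, (column A j).card ≤ 3)
    (i : Fin m) : ∑ j, finrank K ↥(flat K u (column A j) ⊓ flat K u {i}) =
      (A i \ Smult A 3).card + (Smult A 3).card := by
  simp only [card_eq_sum_ite_mem, ← Finset.sum_add_distrib]
  refine Finset.sum_congr rfl fun j _ => ?_
  simp only [Finset.mem_sdiff, ← mem_column (A := A), mem_smult]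
  have hinf := hu.finrank_flat_inf_flat (N := column A j) (M := {i})
  have hcol := hA j
  by_cases hi : i ∈ column A j
  · rw [Finset.union_singleton, Finset.insert_eq_of_mem hi, Finset.card_singleton] at hinf
    simp only [hi, true_and]
    split_ifs <;> omega
  · rw [Finset.union_singleton, Finset.card_insert_of_notMem hi, Finset.card_singleton] at hinf
    simp only [hi, false_and, if_false]
    split_ifs <;> omega

theorem sum_finrank_inf_line (hu : GeneralPosition K u) (hA : ∀ j, (column A j).card ≤ 3)
    {a b : Fin m} (hab : a ≠ b) :
    ∑ j, finrank K ↥(flat K u (column A j) ⊓ flat K u {a, b}) =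
      (A a \ Smult A 3).card + (A b \ Smult A 3).card +
        (Smult A 2 \ (Smult A 3 ∪ A a ∪ A b)).card + 2 * (Smult A 3).card := by
  simp only [card_eq_sum_ite_mem, Finset.mul_sum, ← Finset.sum_add_distrib]
  refine Finset.sum_congr rfl fun j _ => ?_
  simp only [Finset.mem_sdiff, Finset.mem_union, ← mem_column (A := A), mem_smult]
  have hinf := hu.finrank_flat_inf_flat (N := column A j) (M := {a, b})
  have hunion := card_union_pair_add hab (column A j)
  have hcol := hA j
  rw [Finset.card_pair hab] at hinf
  by_cases ha : a ∈ column A j <;> by_cases hb : b ∈ column A j <;> grind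

theorem finrank_line_inf_line (hu : GeneralPosition K u) {N M : Finset (Fin m)} (hN : N.card = 2)
    (hM : M.card = 2) (hNM : Disjoint N M) :
    finrank K ↥(flat K u N ⊓ flat K u M) = 1 := by
  have h := hu.finrank_flat_inf_flat (N := N) (M := M)
  rw [Finset.card_union_of_disjoint hNM] at h
  omega

theorem le_sum_finrank_inf_meet (hu : GeneralPosition K u) (hA : ∀ j, (column A j).card ≤ 3)
    {a b c d : Fin m} (hab : a ≠ b) (hcd : c ≠ d) (hdisj : Disjoint {a, b} ({c, d} : Finset _)) :
    ((A a ∩ A b) \ Smult A 3).card + ((A c ∩ A d) \ Smult A 3).card + (Smult A 3).card ≤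
      ∑ j, finrank K ↥(flat K u (column A j) ⊓ (flat K u {a, b} ⊓ flat K u {c, d})) := by
  simp only [card_eq_sum_ite_mem, ← Finset.sum_add_distrib]
  refine Finset.sum_le_sum fun j _ => ?_
  simp only [Finset.mem_sdiff, Finset.mem_inter, ← mem_column (A := A), mem_smult]
  have := hu.finiteDimensional
  have hone := hu.finrank_line_inf_line (Finset.card_pair hab) (Finset.card_pair hcd) hdisj
  have hcard : ¬((a ∈ column A j ∧ b ∈ column A j) ∧ c ∈ column A j ∧ d ∈ column A j) := by
    rintro ⟨⟨ha, hb⟩, hc, hd⟩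
    have hsub : {a, b} ∪ {c, d} ⊆ column A j := by grind
    have := (Finset.card_le_card hsub).trans (hA j)
    rw [Finset.card_union_of_disjoint hdisj, Finset.card_pair hab, Finset.card_pair hcd] at this
    omega
  by_cases hmem : (column A j).card = 3 ∨ (a ∈ column A j ∧ b ∈ column A j) ∨
      c ∈ column A j ∧ d ∈ column A j
  · have hle : flat K u {a, b} ⊓ flat K u {c, d} ≤ flat K u (column A j) := by
      rcases hmem with h3 | hab | hcd
      · exact le_top.trans_eq (hu.flat_eq_top h3).symm
      · exact inf_le_left.trans (flat_mono (by grind))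
      · exact inf_le_right.trans (flat_mono (by grind))
    rw [inf_eq_right.2 hle, hone]
    grind
  · grind

theorem card_pairs_through_line_add_le (hu : GeneralPosition K u) {U : Submodule K V} {r : ℕ}
    (hU : finrank K U = 1) (hmem : ∀ i, u i ∉ U)
    (hpoint : ∀ i, (A i \ Smult A 3).card + (Smult A 3).card ≤ r)
    (hmeet : ∀ i j k l : Fin m, i ≠ j → i ≠ k → i ≠ l → j ≠ k → j ≠ l → k ≠ l →
      ((A i ∩ A j) \ Smult A 3).card + ((A k ∩ A l) \ Smult A 3).card + (Smult A 3).card ≤ r)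
    (hsmult : (Smult A 3).card ≤ r) :
    ((Smult A 2).filter fun j => U ≤ flat K u (column A j)).card + (Smult A 3).card ≤ r := by
  set P := (Smult A 2).filter fun j => U ≤ flat K u (column A j)
  have hP : ∀ {j}, j ∈ P ↔ (column A j).card = 2 ∧ U ≤ flat K u (column A j) := by
    simp only [P, Finset.mem_filter, mem_smult, implies_true]
  rcases P.eq_empty_or_nonempty with hempty | ⟨j, hj⟩
  · rwa [hempty, Finset.card_empty, zero_add]
  obtain ⟨a, b, hab, hcol⟩ := Finset.card_eq_two.1 (hP.1 hj).1
  by_cases hall : ∀ k ∈ P, column A k = column A j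
  · have hsub : P ⊆ A a \ Smult A 3 := fun k hk => by
      rw [Finset.mem_sdiff, ← mem_column, mem_smult, (hP.1 hk).1, hall k hk, hcol]
      simp
    exact (Nat.add_le_add_right (Finset.card_le_card hsub) _).trans (hpoint a)
  push Not at hall
  obtain ⟨k, hk, hkj⟩ := hall
  obtain ⟨c, d, hcd, hcol'⟩ := Finset.card_eq_two.1 (hP.1 hk).1
  have hdisj := hu.disjoint_of_le_flat hU hmem (hP.1 hj).1 (hP.1 hk).1 (hP.1 hj).2 (hP.1 hk).2
    hkj.symm
  have hsub : P ⊆ ((A a ∩ A b) \ Smult A 3) ∪ ((A c ∩ A d) \ Smult A 3) := fun l hl => by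
    have hor := hu.eq_or_eq_of_le_flat hU hmem (hP.1 hj).1 (hP.1 hk).1 (hP.1 hl).1 (hP.1 hj).2
      (hP.1 hk).2 (hP.1 hl).2 hkj.symm
    simp only [Finset.mem_union, Finset.mem_sdiff, Finset.mem_inter, ← mem_column (A := A),
      mem_smult, (hP.1 hl).1]
    rcases hor with h | h
    · simp [h, hcol]
    · simp [h, hcol']
  rw [hcol, hcol'] at hdisj
  have hcard := (Finset.card_le_card hsub).trans (Finset.card_union_le _ _)
  refine (Nat.add_le_add_right hcard _).trans (hmeet a b c d hab ?_ ?_ ?_ ?_ hcd) <;> grind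

theorem sum_finrank_inf_le_of_finrank_eq_one (hu : GeneralPosition K u)
    (hA : ∀ j, (column A j).card ≤ 3) {U : Submodule K V} {r : ℕ}
    (hU : finrank K U = 1)
    (hpoint : ∀ i, (A i \ Smult A 3).card + (Smult A 3).card ≤ r)
    (hmeet : ∀ i j k l : Fin m, i ≠ j → i ≠ k → i ≠ l → j ≠ k → j ≠ l → k ≠ l →
      ((A i ∩ A j) \ Smult A 3).card + ((A k ∩ A l) \ Smult A 3).card + (Smult A 3).card ≤ r)
    (hsmult : (Smult A 3).card ≤ r) :
    ∑ j, finrank K ↥(flat K u (column A j) ⊓ U) ≤ r := by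
  by_cases hmem : ∃ i, u i ∈ U
  · obtain ⟨i, hi⟩ := hmem
    rw [hu.eq_flat (U := U) (N := {i}) (by simpa using hU) (by simpa using hi),
      hu.sum_finrank_inf_point hA]
    exact hpoint i
  push Not at hmem
  have := hu.finiteDimensional
  refine le_trans ?_ (hu.card_pairs_through_line_add_le hU hmem hpoint hmeet hsmult)
  rw [card_eq_sum_ite_mem, card_eq_sum_ite_mem, ← Finset.sum_add_distrib]
  refine Finset.sum_le_sum fun j _ => ?_
  simp only [Finset.mem_filter, mem_smult]
  by_cases hle : U ≤ flat K u (column A j)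
  · have hone : 1 ≤ (column A j).card := by
      rw [← hU, ← hu.finrank_flat_of_card_le (hA j)]
      exact finrank_mono hle
    have hne : (column A j).card ≠ 1 := fun h1 => by
      obtain ⟨i, hi⟩ := Finset.card_pos.1 hone
      have heq : U = flat K u (column A j) :=
        eq_of_le_of_finrank_eq hle (by rw [hU, hu.finrank_flat_of_card_le (hA j), h1])
      exact hmem i (heq ▸ apply_mem_flat hi)
    have := hA j
    rw [inf_eq_right.2 hle, hU]
    grind
  · have hlt := finrank_lt_finrank_of_lt (inf_lt_right.2 hle)
    omega

theorem sum_finrank_inf_le_of_finrank_eq_two (hu : GeneralPosition K u)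
    (hA : ∀ j, (column A j).card ≤ 3) {U : Submodule K V} {r : ℕ}
    (hU : finrank K U = 2)
    (hpoint : ∀ i, (A i \ Smult A 3).card + (Smult A 3).card ≤ r)
    (hline : ∀ i j : Fin m, i ≠ j → (A i \ Smult A 3).card + (A j \ Smult A 3).card +
      (Smult A 2 \ (Smult A 3 ∪ A i ∪ A j)).card + 2 * (Smult A 3).card ≤ 2 * r)
    (hplane : (Smult A 1).card + 2 * (Smult A 2).card + 3 * (Smult A 3).card ≤ 3 * r) :
    ∑ j, finrank K ↥(flat K u (column A j) ⊓ U) ≤ 2 * r := by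
  by_cases hmem : ∃ a b, a ≠ b ∧ u a ∈ U ∧ u b ∈ U
  · obtain ⟨a, b, hab, ha, hb⟩ := hmem
    rw [hu.eq_flat (U := U) (N := {a, b}) (by rw [hU, Finset.card_pair hab]) (by simp [ha, hb]),
      hu.sum_finrank_inf_line hA hab]
    exact hline a b hab
  push Not at hmem
  have := hu.finiteDimensional
  set X := (Smult A 1).filter fun j => flat K u (column A j) ≤ U
  have hX : X.card ≤ (Smult A 1).card := Finset.card_filter_le _ _
  have hXr : X.card + (Smult A 3).card ≤ r :=
    card_points_on_line_add_le hmem hpoint (by omega)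
  suffices hsum : ∑ j, finrank K ↥(flat K u (column A j) ⊓ U) ≤
      X.card + (Smult A 2).card + 2 * (Smult A 3).card by omega
  simp only [card_eq_sum_ite_mem, Finset.mul_sum, ← Finset.sum_add_distrib]
  refine Finset.sum_le_sum fun j _ => ?_
  simp only [X, Finset.mem_filter, mem_smult]
  have hcard := hA j
  have hflat := hu.finrank_flat_of_card_le hcard
  have hle_two : finrank K ↥(flat K u (column A j) ⊓ U) ≤ 2 := hU ▸ finrank_mono inf_le_right
  have hle_card := hflat ▸ finrank_mono (inf_le_left (a := flat K u (column A j)) (b := U))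
  have hlt : ¬flat K u (column A j) ≤ U →
      finrank K ↥(flat K u (column A j) ⊓ U) < (column A j).card := fun h =>
    hflat ▸ finrank_lt_finrank_of_lt (inf_lt_left.2 h)
  have hpair : (column A j).card = 2 → ¬flat K u (column A j) ≤ U := fun htwo hle => by
    obtain ⟨a, b, hab, hcol⟩ := Finset.card_eq_two.1 htwo
    rw [hcol, flat_le_iff] at hle
    exact hmem a b hab (hle a (by simp)) (hle b (by simp))
  grind

theorem hallCondition_iff (hu : GeneralPosition K u) (hA : ∀ j, (column A j).card ≤ 3) {r : ℕ} :
    HallCondition r (fun j => flat K u (column A j)) ↔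
      (∀ i, (A i \ Smult A 3).card + (Smult A 3).card ≤ r) ∧
      (∀ i j k l : Fin m, i ≠ j → i ≠ k → i ≠ l → j ≠ k → j ≠ l → k ≠ l →
        ((A i ∩ A j) \ Smult A 3).card + ((A k ∩ A l) \ Smult A 3).card +
          (Smult A 3).card ≤ r) ∧
      (∀ i j : Fin m, i ≠ j → (A i \ Smult A 3).card + (A j \ Smult A 3).card +
        (Smult A 2 \ (Smult A 3 ∪ A i ∪ A j)).card + 2 * (Smult A 3).card ≤ 2 * r) ∧
      (Smult A 1).card + 2 * (Smult A 2).card + 3 * (Smult A 3).card ≤ 3 * r := by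
  have := hu.finiteDimensional
  constructor
  · refine fun h => ⟨fun i => ?_, fun i j k l hij hik hil hjk hjl hkl => ?_, fun i j hij => ?_, ?_⟩
    · simpa [hu.sum_finrank_inf_point hA, hu.finrank_flat] using h (flat K u {i})
    · have hdisj : Disjoint {i, j} ({k, l} : Finset (Fin m)) := by
        simp [hik.symm, hil.symm, hjk.symm, hjl.symm]
      have hle := (hu.le_sum_finrank_inf_meet hA hij hkl hdisj).trans (h _)
      rwa [hu.finrank_line_inf_line (Finset.card_pair hij) (Finset.card_pair hkl) hdisj,
        mul_one] at hle
    · simpa [hu.sum_finrank_inf_line hA hij, hu.finrank_flat, Finset.card_pair hij, mul_comm]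
        using h (flat K u {i, j})
    · simpa [hu.sum_finrank_inf_top hA, hu.finrank_eq, mul_comm] using h ⊤
  · rintro ⟨hpoint, hmeet, hline, hplane⟩ U
    have hle : finrank K U ≤ 3 := hu.finrank_eq ▸ finrank_le U
    interval_cases hU : finrank K U
    · rw [mul_zero, nonpos_iff_eq_zero]
      exact Finset.sum_eq_zero fun j _ => by rw [finrank_eq_zero.1 hU, inf_bot_eq, finrank_bot]
    · rw [mul_one]
      exact hu.sum_finrank_inf_le_of_finrank_eq_one hA hU hpoint hmeet (by omega)
    · rw [mul_comm]
      exact hu.sum_finrank_inf_le_of_finrank_eq_two hA hU hpoint hline hplane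
    · have htop : U = ⊤ := eq_top_of_finrank_eq (hU.trans hu.finrank_eq.symm)
      rw [htop, hu.sum_finrank_inf_top hA]
      exact hplane.trans_eq (mul_comm 3 r)

end GeneralPosition

end ColumnCounts

theorem infinite_tField (F : Type*) [Field F] (m n s r : ℕ) [Nonempty (Fin m)] [Nonempty (Fin s)] :
    Infinite (TField F m n s r) :=
  Infinite.of_injective _ (IsFractionRing.injective
    (MvPolynomial ((Fin m × Fin s) ⊕ (Fin n × Fin r)) F) (TField F m n s r))

theorem forall_card_column_le_three_iff {m n : ℕ} {A : Fin m → Finset (Fin n)} :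
    (∀ j, (column A j).card ≤ 3) ↔ ∀ i j k l : Fin m, i ≠ j → i ≠ k → i ≠ l → j ≠ k → j ≠ l →
      k ≠ l → (A i ∩ A j ∩ A k ∩ A l).card = 0 := by
  simp only [← not_lt, Finset.three_lt_card_iff, mem_column, Finset.card_eq_zero,
    Finset.eq_empty_iff_forall_notMem, Finset.mem_inter]
  grind

theorem hasIndepTensors_flat_iff_hallCondition {F : Type*} [Field F] {m n r : ℕ}
    {A : Fin m → Finset (Fin n)} :
    HasIndepTensors r (fun j => flat (TField F m n 3 r) (genericLeft F m n 3 r) (column A j)) ↔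
      HallCondition r fun j => flat (TField F m n 3 r) (genericLeft F m n 3 r) (column A j) := by
  constructor
  · rintro ⟨v, hv⟩
    simpa only [Fintype.card_fin] using hv.hallCondition
  intro h
  rcases isEmpty_or_nonempty (Fin m) with hm | hm
  · exact hasIndepTensors_of_forall_eq_bot (fun j => by simp [flat]) r
  · have := infinite_tField F m n 3 r
    exact h.hasIndepTensors fun j =>
      (generalPosition_genericLeft F m n r).flat_eq_bot_or_isAtom_or_isCoatom_or_eq_top _

theorem case_s_eq_three_general (F : Type*) [Field F] (m n r : ℕ) (A : Fin m → Finset (Fin n)) :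
    TensorIndep F m n 3 r {p : Fin m × Fin n | p.2 ∈ A p.1} ↔
      ((∀ i j k l : Fin m, i ≠ j → i ≠ k → i ≠ l → j ≠ k → j ≠ l → k ≠ l →
          (A i ∩ A j ∩ A k ∩ A l).card = 0) ∧
       (∀ i : Fin m, (A i \ Smult A 3).card + (Smult A 3).card ≤ r) ∧
       (∀ i j k l : Fin m, i ≠ j → i ≠ k → i ≠ l → j ≠ k → j ≠ l → k ≠ l →
          ((A i ∩ A j) \ Smult A 3).card + ((A k ∩ A l) \ Smult A 3).card +
            (Smult A 3).card ≤ r) ∧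
       (∀ i j : Fin m, i ≠ j →
          (A i \ Smult A 3).card + (A j \ Smult A 3).card +
            (Smult A 2 \ (Smult A 3 ∪ A i ∪ A j)).card + 2 * (Smult A 3).card ≤ 2 * r) ∧
       (Smult A 1).card + 2 * (Smult A 2).card + 3 * (Smult A 3).card ≤ 3 * r) := by
  have hE : {p : Fin m × Fin n | p.2 ∈ A p.1} = {p | p.1 ∈ column A p.2} :=
    Set.ext fun _ => mem_column.symm
  rw [hE, tensorIndep_iff, ← forall_card_column_le_three_iff]
  simp only [linearIndepOn_genericLeft_iff]
  exact and_congr_right fun hA => hasIndepTensors_flat_iff_hallCondition.trans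
    ((generalPosition_genericLeft F m n r).hallCondition_iff hA)

theorem case_s_eq_three (F : Type*) [Field F] (m n r : ℕ) (hm : 3 ≤ m) (hr : r ≤ n)
    (A : Fin m → Finset (Fin n)) (hA : ∀ i, (A i).card ≤ r) :
    TensorIndep F m n 3 r {p : Fin m × Fin n | p.2 ∈ A p.1} ↔
      ((∀ i j k l : Fin m, i ≠ j → i ≠ k → i ≠ l → j ≠ k → j ≠ l → k ≠ l →
          (A i ∩ A j ∩ A k ∩ A l).card = 0) ∧
       (∀ i : Fin m, (A i \ Smult A 3).card + (Smult A 3).card ≤ r) ∧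
       (∀ i j k l : Fin m, i ≠ j → i ≠ k → i ≠ l → j ≠ k → j ≠ l → k ≠ l →
          ((A i ∩ A j) \ Smult A 3).card + ((A k ∩ A l) \ Smult A 3).card +
            (Smult A 3).card ≤ r) ∧
       (∀ i j : Fin m, i ≠ j →
          (A i \ Smult A 3).card + (A j \ Smult A 3).card +
            (Smult A 2 \ (Smult A 3 ∪ A i ∪ A j)).card + 2 * (Smult A 3).card ≤ 2 * r) ∧
       (Smult A 1).card + 2 * (Smult A 2).card + 3 * (Smult A 3).card ≤ 3 * r) :=
  case_s_eq_three_general F m n r A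
end
end

section
/- Let 0 ≤ a ≤ m and 0 ≤ b ≤ n. Let C_1 and C_2 be distinct minimal Laman violators in [m]×[n] whose minimal rectangles are S_1×T_1 and S_2×T_2, respectively. If |S_1 ∩ S_2| ≥ a, then for every element e ∈ C_1 ∪ C_2, the set (C_1 ∪ C_2) ∖ {e} violates the (a,b)-Laman condition. -/
open scoped Classical

noncomputable section

/-- `U` violates the `(a,b)`-Laman condition: there are `S ⊆ [m]`, `T ⊆ [n]` with
`|S| ≥ a`, `|T| ≥ b` and `|U ∩ (S×T)| > |S|·b + |T|·a − a·b` (stated additively to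
avoid truncated subtraction). -/
def ViolatesLaman (m n a b : ℕ) (U : Finset (Fin m × Fin n)) : Prop :=
  ∃ S : Finset (Fin m), ∃ T : Finset (Fin n), a ≤ S.card ∧ b ≤ T.card ∧
    S.card * b + T.card * a < (U ∩ S ×ˢ T).card + a * b

/-- `U` is a minimal set violating the `(a,b)`-Laman condition. -/
def MinimalLamanViolator (m n a b : ℕ) (U : Finset (Fin m × Fin n)) : Prop :=
  ViolatesLaman m n a b U ∧ ∀ V : Finset (Fin m × Fin n), V ⊂ U → ¬ ViolatesLaman m n a b V

/-!
The bound `f(S, T) = |S|b + |T|a - ab` is modular on pairs, and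
`|S × T| - f(S, T) = (|S| - a)(|T| - b)`. By the latter, a rectangle with `|S| ≥ a` that contains
more than `f(S, T)` points automatically has `|T| ≥ b`. Let `Sᵢ × Tᵢ` be the minimal rectangle of
`Cᵢ`. Since `C₁ ∩ C₂` is a proper subset of `C₁`, it has at most `f(S₁ ∩ S₂, T₁ ∩ T₂)` elements,
while `|Cᵢ| ≥ f(Sᵢ, Tᵢ) + 1`. Modularity then gives
`|C₁ ∪ C₂| ≥ f(S₁ ∪ S₂, T₁ ∪ T₂) + 2`, so one element can be spared.
-/

section LamanViolators

open Finset

variable {α β : Type*} {a b : ℕ}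

/-- The bound `|S|b + |T|a - ab` that the `(a,b)`-Laman condition puts on the number of points in
the rectangle `S × T`; it takes values in `ℤ` so that the subtraction is not truncated. -/
def lamanBound (a b : ℕ) (S : Finset α) (T : Finset β) : ℤ :=
  #S * b + #T * a - a * b

lemma lamanBound_mono {S S' : Finset α} {T T' : Finset β} (hS : S ⊆ S') (hT : T ⊆ T') :
    lamanBound a b S T ≤ lamanBound a b S' T' := by
  unfold lamanBound
  gcongr

lemma card_product_sub_lamanBound (a b : ℕ) (S : Finset α) (T : Finset β) :
    (#(S ×ˢ T) : ℤ) - lamanBound a b S T = (#S - a) * (#T - b) := by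
  rw [card_product, lamanBound]
  push_cast
  ring

lemma lt_card_right_of_lamanBound_lt_card_product {S : Finset α} {T : Finset β} (hS : a ≤ #S)
    (h : lamanBound a b S T < #(S ×ˢ T)) : b < #T := by
  have hpos : (0 : ℤ) < (#S - a) * (#T - b) := by
    rw [← card_product_sub_lamanBound]
    exact sub_pos.2 h
  have hS' : (0 : ℤ) ≤ #S - a := sub_nonneg.2 (mod_cast hS)
  exact_mod_cast sub_pos.1 (pos_of_mul_pos_right hpos hS')

variable [DecidableEq α] [DecidableEq β]

lemma lamanBound_union_add_lamanBound_inter (a b : ℕ) (S₁ S₂ : Finset α) (T₁ T₂ : Finset β) :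
    lamanBound a b (S₁ ∪ S₂) (T₁ ∪ T₂) + lamanBound a b (S₁ ∩ S₂) (T₁ ∩ T₂) =
      lamanBound a b S₁ T₁ + lamanBound a b S₂ T₂ := by
  have hS : (#(S₁ ∪ S₂) + #(S₁ ∩ S₂) : ℤ) = #S₁ + #S₂ := mod_cast card_union_add_card_inter S₁ S₂
  have hT : (#(T₁ ∪ T₂) + #(T₁ ∩ T₂) : ℤ) = #T₁ + #T₂ := mod_cast card_union_add_card_inter T₁ T₂
  unfold lamanBound
  linear_combination (b : ℤ) * hS + (a : ℤ) * hT

/-- Violation of the `(a,b)`-Laman condition by a finite set of points in a product of two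
arbitrary types; on `Fin m × Fin n` this is `ViolatesLaman`. -/
def IsLamanViolator (a b : ℕ) (U : Finset (α × β)) : Prop :=
  ∃ (S : Finset α) (T : Finset β), a ≤ #S ∧ b ≤ #T ∧ lamanBound a b S T < #(U ∩ S ×ˢ T)

variable {S S₁ S₂ : Finset α} {T T₁ T₂ : Finset β} {U C₁ C₂ : Finset (α × β)}

lemma IsLamanViolator.of_subset_product (hS : a ≤ #S) (hU : U ⊆ S ×ˢ T)
    (h : lamanBound a b S T < #U) : IsLamanViolator a b U := by
  have hprod : lamanBound a b S T < #(S ×ˢ T) := h.trans_le (mod_cast card_le_card hU)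
  refine ⟨S, T, hS, (lt_card_right_of_lamanBound_lt_card_product hS hprod).le, ?_⟩
  rwa [inter_eq_left.2 hU]

lemma lamanBound_image_lt_card_of_minimal (h : Minimal (IsLamanViolator a b) U) :
    lamanBound a b (U.image Prod.fst) (U.image Prod.snd) < #U := by
  obtain ⟨S, T, hS, hT, hlt⟩ := h.prop
  have hviol : IsLamanViolator a b (U ∩ S ×ˢ T) :=
    ⟨S, T, hS, hT, by rwa [inter_assoc, inter_self]⟩
  have hU : U ⊆ S ×ˢ T := (h.le_of_le hviol inter_subset_left).trans inter_subset_right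
  have hfst : U.image Prod.fst ⊆ S := image_subset_iff.2 fun p hp ↦ (mem_product.1 (hU hp)).1
  have hsnd : U.image Prod.snd ⊆ T := image_subset_iff.2 fun p hp ↦ (mem_product.1 (hU hp)).2
  calc lamanBound a b (U.image Prod.fst) (U.image Prod.snd)
      ≤ lamanBound a b S T := lamanBound_mono hfst hsnd
    _ < #(U ∩ S ×ˢ T) := hlt
    _ = #U := by rw [inter_eq_left.2 hU]

lemma lamanBound_union_add_one_lt_card_union (hS : a ≤ #(S₁ ∩ S₂))
    (hC₁ : C₁ ⊆ S₁ ×ˢ T₁) (hC₂ : C₂ ⊆ S₂ ×ˢ T₂)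
    (h₁ : lamanBound a b S₁ T₁ < #C₁) (h₂ : lamanBound a b S₂ T₂ < #C₂)
    (hinter : ¬ IsLamanViolator a b (C₁ ∩ C₂)) :
    lamanBound a b (S₁ ∪ S₂) (T₁ ∪ T₂) + 1 < #(C₁ ∪ C₂) := by
  have hsub : C₁ ∩ C₂ ⊆ (S₁ ∩ S₂) ×ˢ (T₁ ∩ T₂) := by
    rw [← product_inter_product]
    exact inter_subset_inter hC₁ hC₂
  have hle : (#(C₁ ∩ C₂) : ℤ) ≤ lamanBound a b (S₁ ∩ S₂) (T₁ ∩ T₂) :=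
    not_lt.1 fun hlt ↦ hinter (.of_subset_product hS hsub hlt)
  have hmod := lamanBound_union_add_lamanBound_inter a b S₁ S₂ T₁ T₂
  have hcard := card_union_add_card_inter C₁ C₂
  lia

theorem laman_circuit_elimination_general (hne : C₁ ≠ C₂)
    (h₁ : Minimal (IsLamanViolator a b) C₁) (h₂ : Minimal (IsLamanViolator a b) C₂)
    (hS : a ≤ #(C₁.image Prod.fst ∩ C₂.image Prod.fst)) (e : α × β) :
    IsLamanViolator a b ((C₁ ∪ C₂).erase e) := by
  have hssub : C₁ ∩ C₂ ⊂ C₁ :=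
    inter_subset_left.ssubset_of_ne fun h ↦ hne (h₂.eq_of_le h₁.prop (inter_eq_left.1 h))
  have hlt := lamanBound_union_add_one_lt_card_union hS subset_product subset_product
    (lamanBound_image_lt_card_of_minimal h₁) (lamanBound_image_lt_card_of_minimal h₂)
    (h₁.not_prop_of_lt hssub)
  have hsub : (C₁ ∪ C₂).erase e ⊆ (C₁.image Prod.fst ∪ C₂.image Prod.fst) ×ˢ
      (C₁.image Prod.snd ∪ C₂.image Prod.snd) := by
    rw [← image_union, ← image_union]
    exact (erase_subset e _).trans subset_product
  have hcard : #(C₁ ∪ C₂) - 1 ≤ #((C₁ ∪ C₂).erase e) := pred_card_le_card_erase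
  exact .of_subset_product (hS.trans (card_le_card inter_subset_union)) hsub (by lia)

end LamanViolators

section Fin

variable {m n a b : ℕ} {U : Finset (Fin m × Fin n)}

lemma violatesLaman_iff_isLamanViolator : ViolatesLaman m n a b U ↔ IsLamanViolator a b U := by
  unfold ViolatesLaman IsLamanViolator lamanBound
  simp only [sub_lt_iff_lt_add]
  norm_cast

lemma minimalLamanViolator_iff_minimal :
    MinimalLamanViolator m n a b U ↔ Minimal (IsLamanViolator a b) U := by
  rw [minimal_iff_forall_lt]
  simp only [MinimalLamanViolator, violatesLaman_iff_isLamanViolator]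

end Fin

theorem laman_circuit_elimination (m n a b : ℕ) (ha : a ≤ m) (hb : b ≤ n)
    (C₁ C₂ : Finset (Fin m × Fin n)) (hne : C₁ ≠ C₂)
    (h₁ : MinimalLamanViolator m n a b C₁) (h₂ : MinimalLamanViolator m n a b C₂)
    (hS : a ≤ (C₁.image Prod.fst ∩ C₂.image Prod.fst).card) :
    ∀ e ∈ C₁ ∪ C₂, ViolatesLaman m n a b ((C₁ ∪ C₂).erase e) :=
  fun e _ ↦ violatesLaman_iff_isLamanViolator.2 <| laman_circuit_elimination_general hne
    (minimalLamanViolator_iff_minimal.1 h₁) (minimalLamanViolator_iff_minimal.1 h₂) hS e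
end
end
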